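/- arXiv:2011.13977 — 5 statements merged into one kernel-verified Lean document; each statement's English description precedes it below -/
import Mathlib

section
/- Let I be an instance with n agents and n objects and let v be a unit-sum valuation profile consistent with I. Set t_1 = 1/n^{1/3} and t_i = 1/(min{i, n^{1/3}}·n^{2/3}) for 2 ≤ i ≤ n. Let μ_MM be obtained from a maximum-weight matching of G_I under the weights assigning to each edge e = (a_i, h_j) of rank r the weight t_r if v_i(h_j) ≥ t_r and 0 otherwise, by deleting all edges of weight 0. Let μ'_aux be a matching of G_I containing the maximum possible number of rank-1 edges, let X'_1 be the set of rank-1 edges of μ'_aux, and let μ_aux be the set of edges (a, h) of μ'_aux such that neither a nor h occurs in an edge of μ_MM. If μ_MM contains at least one rank-1 edge, then SW(μ_MM | v) + SW(μ_aux | v) ≥ max{|X'_1|/(2n), 1/n^{1/3}}. -/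
open Finset
open scoped Classical

/-- A one-sided matching instance with `n` agents and `n` objects.  Agent `i` has a
nonempty acceptable set `accept i` and a weak order `pref i` on it
(`pref i h h'` means agent `i` weakly prefers object `h` to object `h'`). -/
structure OSMInstance (n : ℕ) where
  accept : Fin n → Finset (Fin n)
  accept_nonempty : ∀ i, (accept i).Nonempty
  pref : Fin n → Fin n → Fin n → Prop
  pref_refl : ∀ i h, h ∈ accept i → pref i h h
  pref_trans : ∀ i h₁ h₂ h₃, h₁ ∈ accept i → h₂ ∈ accept i → h₃ ∈ accept i →
    pref i h₁ h₂ → pref i h₂ h₃ → pref i h₁ h₃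
  pref_total : ∀ i h₁ h₂, h₁ ∈ accept i → h₂ ∈ accept i → pref i h₁ h₂ ∨ pref i h₂ h₁

namespace OSMInstance

variable {n : ℕ}

/-- Agent `i` strictly prefers object `h` to object `h'`. -/
def strictPref (I : OSMInstance n) (i h h' : Fin n) : Prop :=
  I.pref i h h' ∧ ¬ I.pref i h' h

/-- The rank of the edge `(i, h)` of `G_I`: one plus the number of acceptable objects
that agent `i` strictly prefers to `h`. -/
noncomputable def edgeRank (I : OSMInstance n) (e : Fin n × Fin n) : ℕ :=
  ((I.accept e.1).filter (fun h' => I.strictPref e.1 h' e.2)).card + 1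

/-- A matching of `G_I`: a set of acceptable (agent, object) pairs in which every agent
and every object occurs at most once. -/
def IsMatching (I : OSMInstance n) (μ : Finset (Fin n × Fin n)) : Prop :=
  (∀ e ∈ μ, e.2 ∈ I.accept e.1) ∧
  (∀ e ∈ μ, ∀ e' ∈ μ, e.1 = e'.1 → e = e') ∧
  (∀ e ∈ μ, ∀ e' ∈ μ, e.2 = e'.2 → e = e')

/-- Total weight of a set of edges under the edge weights `w`. -/
def weightSum (w : Fin n × Fin n → ℝ) (μ : Finset (Fin n × Fin n)) : ℝ :=
  ∑ e ∈ μ, w e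

/-- Social welfare of the set of edges `μ` under the valuation profile `v`. -/
def SW (_I : OSMInstance n) (v : Fin n → Fin n → ℝ) (μ : Finset (Fin n × Fin n)) : ℝ :=
  ∑ e ∈ μ, v e.1 e.2

/-- `μ` is a maximum-weight matching of `G_I` with respect to edge weights `w`. -/
def IsMaxWeightMatching (I : OSMInstance n) (w : Fin n × Fin n → ℝ)
    (μ : Finset (Fin n × Fin n)) : Prop :=
  I.IsMatching μ ∧ ∀ μ', I.IsMatching μ' → weightSum w μ' ≤ weightSum w μ

/-- `μ` is a priority-`p` matching: a maximum-weight matching when every rank-`r` edge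
gets weight `p r`. -/
noncomputable def IsPriorityMatching (I : OSMInstance n) (p : ℕ → ℝ)
    (μ : Finset (Fin n × Fin n)) : Prop :=
  I.IsMaxWeightMatching (fun e => p (I.edgeRank e)) μ

/-- `v` is a valuation profile consistent with the instance: values lie in `[0,1]`,
unacceptable objects have value `0`, and on acceptable objects the values represent
the weak order. -/
def Consistent (I : OSMInstance n) (v : Fin n → Fin n → ℝ) : Prop :=
  (∀ i h, 0 ≤ v i h ∧ v i h ≤ 1) ∧
  (∀ i h, h ∉ I.accept i → v i h = 0) ∧
  (∀ i h h', h ∈ I.accept i → h' ∈ I.accept i → (I.pref i h h' ↔ v i h' ≤ v i h))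

/-- Unit-sum valuations: each agent's values over acceptable objects sum to `1`. -/
def UnitSum (I : OSMInstance n) (v : Fin n → Fin n → ℝ) : Prop :=
  ∀ i, ∑ h ∈ I.accept i, v i h = 1

/-- Unit-range valuations: each agent values some acceptable object `1`, some
acceptable object `0`, and has two non-equivalent acceptable objects. -/
def UnitRange (I : OSMInstance n) (v : Fin n → Fin n → ℝ) : Prop :=
  ∀ i, (∃ h ∈ I.accept i, v i h = 1) ∧ (∃ h ∈ I.accept i, v i h = 0) ∧
    ∃ h ∈ I.accept i, ∃ h' ∈ I.accept i, I.strictPref i h h'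

/-- Agent `i` is unmatched in `μ`. -/
def Unmatched (_I : OSMInstance n) (μ : Finset (Fin n × Fin n)) (i : Fin n) : Prop :=
  ∀ h, (i, h) ∉ μ

/-- Agent `i` weakly prefers their allocation in `μ'` to their allocation in `μ`
(being unmatched is strictly worse than receiving any acceptable object). -/
def WeakImprove (I : OSMInstance n) (μ' μ : Finset (Fin n × Fin n)) (i : Fin n) : Prop :=
  I.Unmatched μ i ∨ ∃ h h', (i, h) ∈ μ ∧ (i, h') ∈ μ' ∧ I.pref i h' h

/-- Agent `i` strictly prefers their allocation in `μ'` to their allocation in `μ`. -/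
def StrictImprove (I : OSMInstance n) (μ' μ : Finset (Fin n × Fin n)) (i : Fin n) : Prop :=
  (I.Unmatched μ i ∧ ∃ h', (i, h') ∈ μ') ∨
    ∃ h h', (i, h) ∈ μ ∧ (i, h') ∈ μ' ∧ I.strictPref i h' h

/-- `μ` is a Pareto optimal matching of `G_I`. -/
def ParetoOptimal (I : OSMInstance n) (μ : Finset (Fin n × Fin n)) : Prop :=
  I.IsMatching μ ∧
    ¬ ∃ μ', I.IsMatching μ' ∧ (∀ i, I.WeakImprove μ' μ i) ∧ ∃ i, I.StrictImprove μ' μ i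

/-- `sig I μ r` is the number of rank-`r` edges of `μ` (as an integer). -/
noncomputable def sig (I : OSMInstance n) (μ : Finset (Fin n × Fin n)) (r : ℕ) : ℤ :=
  ((μ.filter (fun e => I.edgeRank e = r)).card : ℤ)

end OSMInstance

/-- Lexicographic comparison `f ≤ g` of the length-`len` tuples `(f 0, …, f (len-1))`
and `(g 0, …, g (len-1))`. -/
def LexLe (len : ℕ) (f g : ℕ → ℤ) : Prop :=
  (∀ j < len, f j = g j) ∨ ∃ j < len, (∀ i < j, f i = g i) ∧ f j < g j

namespace OSMInstance

variable {n : ℕ}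

/-- `μ` is a rank-maximal matching: it lexicographically maximizes `(s_1, …, s_n)`. -/
noncomputable def RankMaximal (I : OSMInstance n) (μ : Finset (Fin n × Fin n)) : Prop :=
  I.IsMatching μ ∧ ∀ μ', I.IsMatching μ' →
    LexLe n (fun j => I.sig μ' (j + 1)) (fun j => I.sig μ (j + 1))

/-- `μ` is a max-cardinality rank-maximal matching: it lexicographically maximizes
`(Σ_i s_i, s_1, …, s_n)`. -/
noncomputable def MaxCardRankMaximal (I : OSMInstance n) (μ : Finset (Fin n × Fin n)) : Prop :=
  I.IsMatching μ ∧ ∀ μ', I.IsMatching μ' →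
    LexLe (n + 1) (fun j => if j = 0 then (μ'.card : ℤ) else I.sig μ' j)
      (fun j => if j = 0 then (μ.card : ℤ) else I.sig μ j)

/-- `μ` is a fair matching: it lexicographically maximizes
`(Σ_i s_i, -s_n, -s_(n-1), …, -s_1)`. -/
noncomputable def FairMatching (I : OSMInstance n) (μ : Finset (Fin n × Fin n)) : Prop :=
  I.IsMatching μ ∧ ∀ μ', I.IsMatching μ' →
    LexLe (n + 1) (fun j => if j = 0 then (μ'.card : ℤ) else -I.sig μ' (n + 1 - j))
      (fun j => if j = 0 then (μ.card : ℤ) else -I.sig μ (n + 1 - j))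

end OSMInstance

/-- The priority vector for rank-maximal matchings: a rank-`r` edge gets weight
`n ^ (2 * (n - r + 1))`. -/
noncomputable def pRankMaximal (n : ℕ) : ℕ → ℝ :=
  fun r => (n : ℝ) ^ (2 * (n - r + 1))

/-- The priority vector for max-cardinality rank-maximal matchings: a rank-`r` edge gets
weight `n ^ (2 * n) + n ^ (2 * (n - r))`. -/
noncomputable def pMaxCardRankMaximal (n : ℕ) : ℕ → ℝ :=
  fun r => (n : ℝ) ^ (2 * n) + (n : ℝ) ^ (2 * (n - r))

/-- The priority vector for fair matchings: a rank-`r` edge gets weight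
`4 * n ^ (2 * n) - 2 * n ^ (r - 1)`. -/
noncomputable def pFairVec (n : ℕ) : ℕ → ℝ :=
  fun r => 4 * (n : ℝ) ^ (2 * n) - 2 * (n : ℝ) ^ (r - 1)

/-- The set `𝕡` of the three priority vectors of interest. -/
noncomputable def PrioritySet (n : ℕ) : Set (ℕ → ℝ) :=
  {pRankMaximal n, pMaxCardRankMaximal n, pFairVec n}

/-- The four matching properties considered: Pareto optimal, rank-maximal,
max-cardinality rank-maximal, and fair. -/
inductive MatchProp where
  | po | rm | mcrm | fair

/-- `μ` satisfies the property `X` with respect to the instance `I`. -/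
noncomputable def SatisfiesProp {n : ℕ} (X : MatchProp) (I : OSMInstance n)
    (μ : Finset (Fin n × Fin n)) : Prop :=
  match X with
  | .po => I.ParetoOptimal μ
  | .rm => I.RankMaximal μ
  | .mcrm => I.MaxCardRankMaximal μ
  | .fair => I.FairMatching μ

/-!
Deleting from a matching `μ` every edge that meets a set of edges `ν` costs at most two edges of `μ`
per edge of `ν`. Charging each lost rank-1 edge to an edge of `μ_MM` that it meets therefore gives
`|X'_1| ≤ 2 |μ_MM| + |X'_1 ∩ μ_aux|`. Every edge counted on the right is worth at least `1 / n`: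
for an edge of `μ_MM` because every threshold is at least `1 / n`, for a rank-1 edge because an
agent's favourite object is worth at least the average of `n` values summing to `1`. The bound
`1 / n^(1/3) = t_1` is already met by a single rank-1 edge of `μ_MM`.
-/

lemma card_filter_mem_image_le_of_injOn {α β : Type*} [DecidableEq β] {f : α → β}
    {s : Finset α} (hf : Set.InjOn f s) (t : Finset α) : #(s.filter (f · ∈ t.image f)) ≤ #t :=
  (card_le_card_of_injOn f (fun _ ha => (mem_filter.mp ha).2)
    (hf.mono (filter_subset _ s))).trans card_image_le

section EdgesAvoiding

variable {α β : Type*} [DecidableEq α] [DecidableEq β]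

/-- The edges of `μ` vertex-disjoint from every edge of `ν`, where an edge of a bipartite graph is
the pair of its endpoints. For `ν = μ_MM` and `μ = μ'_aux` this is `μ_aux`. -/
def edgesAvoiding (μ ν : Finset (α × β)) : Finset (α × β) :=
  μ.filter (fun e => ∀ e' ∈ ν, e.1 ≠ e'.1 ∧ e.2 ≠ e'.2)

lemma mem_edgesAvoiding {μ ν : Finset (α × β)} {e : α × β} :
    e ∈ edgesAvoiding μ ν ↔ e ∈ μ ∧ ∀ e' ∈ ν, e.1 ≠ e'.1 ∧ e.2 ≠ e'.2 :=
  mem_filter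

lemma edgesAvoiding_subset_edgesAvoiding {μ μ' : Finset (α × β)} (h : μ ⊆ μ')
    (ν : Finset (α × β)) : edgesAvoiding μ ν ⊆ edgesAvoiding μ' ν :=
  filter_subset_filter _ h

lemma edgesAvoiding_subset (μ ν : Finset (α × β)) : edgesAvoiding μ ν ⊆ μ :=
  filter_subset _ _

lemma subset_edgesAvoiding_union (μ ν : Finset (α × β)) :
    μ ⊆ edgesAvoiding μ ν ∪
      (μ.filter (·.1 ∈ ν.image Prod.fst) ∪ μ.filter (·.2 ∈ ν.image Prod.snd)) := by
  intro e he
  simp only [mem_union, mem_edgesAvoiding, mem_filter, mem_image]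
  grind

lemma card_le_card_edgesAvoiding_add_of_injOn {μ : Finset (α × β)}
    (hfst : Set.InjOn Prod.fst (μ : Set (α × β))) (hsnd : Set.InjOn Prod.snd (μ : Set (α × β)))
    (ν : Finset (α × β)) :
    #μ ≤ #(edgesAvoiding μ ν) + 2 * #ν :=
  calc #μ ≤ #(edgesAvoiding μ ν) +
        (#(μ.filter (·.1 ∈ ν.image Prod.fst)) + #(μ.filter (·.2 ∈ ν.image Prod.snd))) :=
        (card_le_card (subset_edgesAvoiding_union μ ν)).trans <|
          (card_union_le _ _).trans (Nat.add_le_add_left (card_union_le _ _) _)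
    _ ≤ #(edgesAvoiding μ ν) + 2 * #ν := by
        have hagents := card_filter_mem_image_le_of_injOn hfst ν
        have hobjects := card_filter_mem_image_le_of_injOn hsnd ν
        lia

end EdgesAvoiding

namespace OSMInstance

variable {n : ℕ} {I : OSMInstance n} {v : Fin n → Fin n → ℝ} {μ ν : Finset (Fin n × Fin n)}
  {e : Fin n × Fin n}

lemma IsMatching.mono (hμ : I.IsMatching μ) (h : ν ⊆ μ) : I.IsMatching ν :=
  ⟨fun e he => hμ.1 e (h he),
    fun e he e' he' => hμ.2.1 e (h he) e' (h he'),
    fun e he e' he' => hμ.2.2 e (h he) e' (h he')⟩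

lemma IsMatching.card_le_card_edgesAvoiding_add (hμ : I.IsMatching μ)
    (ν : Finset (Fin n × Fin n)) : #μ ≤ #(edgesAvoiding μ ν) + 2 * #ν :=
  card_le_card_edgesAvoiding_add_of_injOn (fun e he e' he' h => hμ.2.1 e he e' he' h)
    (fun e he e' he' h => hμ.2.2 e he e' he' h) ν

lemma edgeRank_le (he : e.2 ∈ I.accept e.1) : I.edgeRank e ≤ n := by
  have hself : e.2 ∉ (I.accept e.1).filter (fun h => I.strictPref e.1 h e.2) := fun hmem =>
    (mem_filter.mp hmem).2.2 (I.pref_refl _ _ he)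
  simpa only [edgeRank, Fintype.card_fin, Nat.add_one_le_iff] using card_lt_univ_of_notMem hself

lemma pref_of_edgeRank_eq_one (he : e.2 ∈ I.accept e.1) (hr : I.edgeRank e = 1) {h : Fin n}
    (hh : h ∈ I.accept e.1) : I.pref e.1 e.2 h := by
  have hempty : (I.accept e.1).filter (fun h' => I.strictPref e.1 h' e.2) = ∅ :=
    card_eq_zero.mp (Nat.succ_injective hr)
  by_contra hnot
  exact filter_eq_empty_iff.mp hempty hh ⟨(I.pref_total _ _ _ he hh).resolve_left hnot, hnot⟩

lemma Consistent.sum_le_mul_of_edgeRank_eq_one (hv : I.Consistent v) (he : e.2 ∈ I.accept e.1)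
    (hr : I.edgeRank e = 1) : ∑ h ∈ I.accept e.1, v e.1 h ≤ n * v e.1 e.2 := by
  have hbest (h) (hh : h ∈ I.accept e.1) : v e.1 h ≤ v e.1 e.2 :=
    (hv.2.2 e.1 e.2 h he hh).mp (pref_of_edgeRank_eq_one he hr hh)
  calc ∑ h ∈ I.accept e.1, v e.1 h ≤ #(I.accept e.1) * v e.1 e.2 := by
        simpa only [nsmul_eq_mul] using sum_le_card_nsmul _ _ _ hbest
    _ ≤ n * v e.1 e.2 := by
        have hcard : #(I.accept e.1) ≤ n := card_finset_fin_le _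
        have hnonneg := (hv.1 e.1 e.2).1
        gcongr

lemma Consistent.one_div_le_of_edgeRank_eq_one (hv : I.Consistent v) (hus : I.UnitSum v)
    (he : e.2 ∈ I.accept e.1) (hr : I.edgeRank e = 1) : 1 / (n : ℝ) ≤ v e.1 e.2 := by
  have hn : (0 : ℝ) < n := mod_cast e.1.pos
  rw [div_le_iff₀' hn, ← hus e.1]
  exact hv.sum_le_mul_of_edgeRank_eq_one he hr

lemma card_mul_le_SW (I : OSMInstance n) {c : ℝ} (hμ : ∀ e ∈ μ, c ≤ v e.1 e.2) :
    #μ * c ≤ I.SW v μ :=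
  (nsmul_eq_mul (#μ) c).symm.trans_le (card_nsmul_le_sum μ (fun e => v e.1 e.2) c hμ)

lemma IsMatching.card_mul_le_SW_add (hμ : I.IsMatching μ) {c : ℝ} (hc : 0 ≤ c)
    (hμc : ∀ e ∈ μ, c ≤ v e.1 e.2) (hνc : ∀ e ∈ ν, c ≤ v e.1 e.2) :
    #μ * c ≤ I.SW v (edgesAvoiding μ ν) + 2 * I.SW v ν := by
  have hcard : (#μ : ℝ) ≤ #(edgesAvoiding μ ν) + 2 * #ν :=
    mod_cast hμ.card_le_card_edgesAvoiding_add ν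
  calc #μ * c ≤ (#(edgesAvoiding μ ν) + 2 * #ν) * c := by gcongr
    _ = #(edgesAvoiding μ ν) * c + 2 * (#ν * c) := by ring
    _ ≤ I.SW v (edgesAvoiding μ ν) + 2 * I.SW v ν := by
        gcongr
        · exact I.card_mul_le_SW fun e he => hμc e (edgesAvoiding_subset μ ν he)
        · exact I.card_mul_le_SW hνc

lemma SW_nonneg (I : OSMInstance n) (hv : ∀ i h, 0 ≤ v i h) (μ : Finset (Fin n × Fin n)) :
    0 ≤ I.SW v μ :=
  sum_nonneg fun e _ => hv e.1 e.2

lemma SW_le_SW_of_subset (I : OSMInstance n) (hv : ∀ i h, 0 ≤ v i h) (h : μ ⊆ ν) :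
    I.SW v μ ≤ I.SW v ν :=
  sum_le_sum_of_subset_of_nonneg h fun e _ _ => hv e.1 e.2

lemma le_SW_of_mem (I : OSMInstance n) (hv : ∀ i h, 0 ≤ v i h) (he : e ∈ μ) :
    v e.1 e.2 ≤ I.SW v μ :=
  single_le_sum (f := fun e : Fin n × Fin n => v e.1 e.2) (fun e _ => hv e.1 e.2) he

lemma IsMatching.card_edgeRank_eq_one_div_le_SW_add (hμ : I.IsMatching μ) (hv : I.Consistent v)
    (hus : I.UnitSum v) (hν : ∀ e ∈ ν, 1 / (n : ℝ) ≤ v e.1 e.2) :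
    (#(μ.filter (fun e => I.edgeRank e = 1)) : ℝ) / (2 * n) ≤
      I.SW v ν + I.SW v (edgesAvoiding μ ν) := by
  set X := μ.filter (fun e => I.edgeRank e = 1)
  have hXμ : X ⊆ μ := filter_subset _ μ
  have hvalue (e) (he : e ∈ X) : 1 / (n : ℝ) ≤ v e.1 e.2 :=
    hv.one_div_le_of_edgeRank_eq_one hus (hμ.1 e (hXμ he)) (mem_filter.mp he).2
  have hnonneg (i h) : 0 ≤ v i h := (hv.1 i h).1
  have hmono : I.SW v (edgesAvoiding X ν) ≤ I.SW v (edgesAvoiding μ ν) :=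
    I.SW_le_SW_of_subset hnonneg (edgesAvoiding_subset_edgesAvoiding hXμ ν)
  calc (#X : ℝ) / (2 * n) = #X * (1 / n) / 2 := by ring
    _ ≤ (I.SW v (edgesAvoiding X ν) + 2 * I.SW v ν) / 2 := by
        gcongr
        exact (hμ.mono hXμ).card_mul_le_SW_add (by positivity) hvalue hν
    _ ≤ I.SW v ν + I.SW v (edgesAvoiding μ ν) := by
        linarith [I.SW_nonneg hnonneg (edgesAvoiding μ ν)]

end OSMInstance

lemma min_rpow_mul_rpow_le {x : ℝ} (hx : 0 ≤ x) {p q : ℝ} (hpq : p + q = 1) (a : ℝ) :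
    min a (x ^ p) * x ^ q ≤ x :=
  calc min a (x ^ p) * x ^ q ≤ x ^ p * x ^ q := by
        gcongr
        exact min_le_right _ _
    _ = x := by
        rw [← Real.rpow_add' hx (hpq ▸ one_ne_zero), hpq, Real.rpow_one]

lemma one_div_le_threshold {n : ℕ} {t : ℕ → ℝ} (ht1 : t 1 = 1 / (n : ℝ) ^ ((1 : ℝ) / 3))
    (ht : ∀ i, 2 ≤ i → i ≤ n →
      t i = 1 / (min (i : ℝ) ((n : ℝ) ^ ((1 : ℝ) / 3)) * (n : ℝ) ^ ((2 : ℝ) / 3)))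
    {r : ℕ} (hr : 1 ≤ r) (hrn : r ≤ n) : 1 / (n : ℝ) ≤ t r := by
  have hn : (1 : ℝ) ≤ n := mod_cast hr.trans hrn
  rcases hr.eq_or_lt with rfl | hr2
  · rw [ht1]
    gcongr
    exact Real.rpow_le_self_of_one_le hn (by norm_num)
  · rw [ht r hr2 hrn]
    gcongr
    exact min_rpow_mul_rpow_le n.cast_nonneg (by norm_num) _

theorem aux_welfare_bound_rank1_general {n : ℕ} (I : OSMInstance n) {v : Fin n → Fin n → ℝ}
    (hv : I.Consistent v) (hus : I.UnitSum v) {t : ℕ → ℝ}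
    (ht : ∀ r, 1 ≤ r → r ≤ n → 1 / (n : ℝ) ≤ t r) {ν : Finset (Fin n × Fin n)}
    (hν : ∀ e ∈ ν, e.2 ∈ I.accept e.1 ∧ t (I.edgeRank e) ≤ v e.1 e.2)
    {μ : Finset (Fin n × Fin n)} (hμ : I.IsMatching μ) (hrank1 : ∃ e ∈ ν, I.edgeRank e = 1) :
    max ((#(μ.filter (fun e => I.edgeRank e = 1)) : ℝ) / (2 * n)) (t 1) ≤
      I.SW v ν + I.SW v (edgesAvoiding μ ν) := by
  have hnonneg (i h) : 0 ≤ v i h := (hv.1 i h).1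
  refine max_le ?_ ?_
  · refine hμ.card_edgeRank_eq_one_div_le_SW_add hv hus fun e he => ?_
    obtain ⟨hacc, hle⟩ := hν e he
    exact (ht _ (Nat.le_add_left 1 _) (OSMInstance.edgeRank_le hacc)).trans hle
  · obtain ⟨e, he, hr⟩ := hrank1
    calc t 1 ≤ v e.1 e.2 := hr ▸ (hν e he).2
      _ ≤ I.SW v ν := I.le_SW_of_mem hnonneg he
      _ ≤ I.SW v ν + I.SW v (edgesAvoiding μ ν) :=
          le_add_of_nonneg_right (I.SW_nonneg hnonneg _)

/-- if the filtered maximum-weight matching contains a rank-1 edge, then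
together with the auxiliary matching its welfare is at least
`max (|X'_1| / (2n)) (1 / n^(1/3))`, for unit-sum valuations. -/
theorem aux_welfare_bound_rank1 {n : ℕ} (I : OSMInstance n)
    (v : Fin n → Fin n → ℝ) (hv : I.Consistent v) (hus : I.UnitSum v)
    (t : ℕ → ℝ) (ht1 : t 1 = 1 / (n : ℝ) ^ ((1 : ℝ) / 3))
    (ht : ∀ i, 2 ≤ i → i ≤ n →
      t i = 1 / (min (i : ℝ) ((n : ℝ) ^ ((1 : ℝ) / 3)) * (n : ℝ) ^ ((2 : ℝ) / 3)))
    (w : Fin n × Fin n → ℝ)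
    (hw : ∀ e, w e = if t (I.edgeRank e) ≤ v e.1 e.2 then t (I.edgeRank e) else 0)
    (μ₀ : Finset (Fin n × Fin n)) (hμ₀ : I.IsMaxWeightMatching w μ₀)
    (μMM : Finset (Fin n × Fin n)) (hμMM : μMM = μ₀.filter (fun e => w e ≠ 0))
    (μaux' : Finset (Fin n × Fin n)) (haux' : I.IsMatching μaux')
    (hauxmax : ∀ μ'', I.IsMatching μ'' →
      (μ''.filter (fun e => I.edgeRank e = 1)).card ≤
        (μaux'.filter (fun e => I.edgeRank e = 1)).card)
    (X1 : Finset (Fin n × Fin n)) (hX1 : X1 = μaux'.filter (fun e => I.edgeRank e = 1))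
    (μaux : Finset (Fin n × Fin n))
    (hμaux : μaux = μaux'.filter (fun e => ∀ e' ∈ μMM, e.1 ≠ e'.1 ∧ e.2 ≠ e'.2))
    (hrank1 : ∃ e ∈ μMM, I.edgeRank e = 1) :
    max ((X1.card : ℝ) / (2 * n)) (1 / (n : ℝ) ^ ((1 : ℝ) / 3)) ≤
      I.SW v μMM + I.SW v μaux := by
  have hMM (e) (he : e ∈ μMM) : e.2 ∈ I.accept e.1 ∧ t (I.edgeRank e) ≤ v e.1 e.2 := by
    obtain ⟨heμ₀, hwe⟩ := mem_filter.mp (hμMM ▸ he)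
    exact ⟨hμ₀.1.1 e heμ₀, (ite_ne_right_iff.mp (hw e ▸ hwe)).1⟩
  have haux : μaux = edgesAvoiding μaux' μMM := by
    ext e
    rw [hμaux, mem_filter, mem_edgesAvoiding]
  rw [hX1, haux, ← ht1]
  exact aux_welfare_bound_rank1_general I hv hus (fun _ => one_div_le_threshold ht1 ht) hMM haux'
    hrank1
end

section
/- Let I be an instance with n ≥ 8 agents and n objects, let μ_1 be any matching of G_I, and let μ_2 be a matching of G_I that maximizes the number of agents matched by an edge of rank at most k, where k = ⌊n^{1/3}/2⌋. Let L_i (respectively X'_i) denote the set of agents matched by a rank-i edge in μ_1 (respectively μ_2), and let X' = ∪_{i=1}^{k} X'_i. Then |X'| ≥ min{k, Σ_{i=k+1}^{n} |L_i|}. -/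
open Finset
open scoped Classical

/-! Let `X` be a matching of edges of rank at most `k` that no further such edge extends. Either
every agent with an acceptable object of rank above `k` is matched in `X`, or one of them is
unmatched; in the latter case all objects of rank at most `k` for that agent, of which there are at
least `k`, are matched in `X`. -/

namespace OSMInstance

variable {n : ℕ} {I : OSMInstance n} {k : ℕ}

section Rank

variable {i x y z : Fin n}

theorem strictPref.trans (hx : x ∈ I.accept i) (hy : y ∈ I.accept i) (hz : z ∈ I.accept i)
    (hxy : I.strictPref i x y) (hyz : I.strictPref i y z) : I.strictPref i x z :=
  ⟨I.pref_trans i x y z hx hy hz hxy.1 hyz.1,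
    fun hzx => hxy.2 (I.pref_trans i y z x hy hz hx hyz.1 hzx)⟩

theorem edgeRank_lt_of_strictPref (hx : x ∈ I.accept i) (hy : y ∈ I.accept i)
    (hxy : I.strictPref i x y) : I.edgeRank (i, x) < I.edgeRank (i, y) := by
  have hsub : {h ∈ I.accept i | I.strictPref i h x} ⊂ {h ∈ I.accept i | I.strictPref i h y} := by
    refine (ssubset_iff_of_subset (monotone_filter_right _ ?_)).2
      ⟨x, mem_filter.2 ⟨hx, hxy⟩, fun hxx => (mem_filter.1 hxx).2.2 (I.pref_refl i x hx)⟩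
    exact fun h hh hhx => hhx.trans hh hx hy hxy
  exact Nat.succ_lt_succ (card_lt_card hsub)

theorem le_card_filter_edgeRank_le (hx : x ∈ I.accept i) (hk : k < I.edgeRank (i, x)) :
    k ≤ #{h ∈ I.accept i | I.edgeRank (i, h) ≤ k} := by
  obtain ⟨y, hy, hmin⟩ := exists_min_image {h ∈ I.accept i | k < I.edgeRank (i, h)}
    (fun h => I.edgeRank (i, h)) ⟨x, mem_filter.2 ⟨hx, hk⟩⟩
  obtain ⟨hyacc, hky⟩ := mem_filter.1 hy
  have hbetter : ∀ h ∈ I.accept i, I.strictPref i h y → I.edgeRank (i, h) ≤ k := by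
    intro h hh hhy
    by_contra! hkh
    exact (edgeRank_lt_of_strictPref hh hyacc hhy).not_ge (hmin h (mem_filter.2 ⟨hh, hkh⟩))
  calc
    k ≤ #{h ∈ I.accept i | I.strictPref i h y} := Nat.lt_succ_iff.1 hky
    _ ≤ #{h ∈ I.accept i | I.edgeRank (i, h) ≤ k} := card_le_card (monotone_filter_right _ hbetter)

end Rank

section Matching

variable {μ ν : Finset (Fin n × Fin n)} {i h : Fin n} {p : Fin n × Fin n → Prop}

theorem isMatching_iff_injOn : I.IsMatching μ ↔ (∀ e ∈ μ, e.2 ∈ I.accept e.1) ∧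
    Set.InjOn Prod.fst (μ : Set (Fin n × Fin n)) ∧ Set.InjOn Prod.snd (μ : Set (Fin n × Fin n)) :=
  ⟨fun hμ => ⟨hμ.1, fun e he e' he' => hμ.2.1 e he e' he', fun e he e' he' => hμ.2.2 e he e' he'⟩,
    fun hμ => ⟨hμ.1, fun _ he _ he' => hμ.2.1 he he', fun _ he _ he' => hμ.2.2 he he'⟩⟩

theorem IsMatching.subset (hμ : I.IsMatching μ) (hνμ : ν ⊆ μ) : I.IsMatching ν := by
  rw [isMatching_iff_injOn] at hμ ⊢
  exact ⟨fun e he => hμ.1 e (hνμ he), hμ.2.1.mono hνμ, hμ.2.2.mono hνμ⟩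

theorem IsMatching.insert (hμ : I.IsMatching μ) (hacc : h ∈ I.accept i)
    (hi : i ∉ μ.image Prod.fst) (hh : h ∉ μ.image Prod.snd) :
    I.IsMatching (insert (i, h) μ) := by
  have hnotMem : (i, h) ∉ (μ : Set (Fin n × Fin n)) := fun hmem => hi (mem_image_of_mem _ hmem)
  rw [isMatching_iff_injOn] at hμ ⊢
  rw [forall_mem_insert, coe_insert, Set.injOn_insert hnotMem, Set.injOn_insert hnotMem,
    ← coe_image, ← coe_image, mem_coe, mem_coe]
  exact ⟨⟨hacc, hμ.1⟩, ⟨hμ.2.1, hi⟩, hμ.2.2, hh⟩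

theorem IsMatching.maximal_filter [DecidablePred p] (hμ : I.IsMatching μ)
    (hmax : ∀ ν, I.IsMatching ν → #(ν.filter p) ≤ #(μ.filter p)) :
    Maximal (fun ν => I.IsMatching ν ∧ ∀ e ∈ ν, p e) (μ.filter p) := by
  refine ⟨⟨hμ.subset (filter_subset p μ), fun e he => (mem_filter.1 he).2⟩, ?_⟩
  rintro ν ⟨hν, hp⟩ hle
  have hcard : #ν ≤ #(μ.filter p) := filter_true_of_mem hp ▸ hmax ν hν
  exact (eq_of_subset_of_card_le hle hcard).ge

theorem IsMatching.card_le_card_agents [DecidablePred p] (hμ : I.IsMatching μ)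
    (hp : ∀ e ∈ μ, p e) : #μ ≤ #{i | ∃ h ∈ I.accept i, p (i, h)} :=
  card_le_card_of_injOn Prod.fst
    (fun e he => (mem_filter_univ _).2 ⟨e.2, hμ.1 e he, hp e he⟩) (isMatching_iff_injOn.1 hμ).2.1

theorem card_accept_filter_le_card_of_maximal [DecidablePred p]
    (hμ : Maximal (fun ν => I.IsMatching ν ∧ ∀ e ∈ ν, p e) μ) (hi : i ∉ μ.image Prod.fst) :
    #{h ∈ I.accept i | p (i, h)} ≤ #μ := by
  suffices hmatched : {h ∈ I.accept i | p (i, h)} ⊆ μ.image Prod.snd from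
    (card_le_card hmatched).trans card_image_le
  intro h hh
  obtain ⟨hacc, hp⟩ := mem_filter.1 hh
  by_contra hfree
  have hext : I.IsMatching (insert (i, h) μ) ∧ ∀ e ∈ insert (i, h) μ, p e :=
    ⟨hμ.prop.1.insert hacc hi hfree, (forall_mem_insert _ _ _).2 ⟨hp, hμ.prop.2⟩⟩
  have hmem : (i, h) ∈ μ := hμ.le_of_ge hext (subset_insert _ _) (mem_insert_self _ _)
  exact hi (mem_image_of_mem Prod.fst hmem)

end Matching

end OSMInstance

open OSMInstance in
theorem boundX_general {n : ℕ} {I : OSMInstance n} {k : ℕ} {X : Finset (Fin n × Fin n)}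
    (hX : Maximal (fun μ => I.IsMatching μ ∧ ∀ e ∈ μ, I.edgeRank e ≤ k) X) :
    min k #{i | ∃ h ∈ I.accept i, k < I.edgeRank (i, h)} ≤ #X := by
  by_cases hsub : ({i | ∃ h ∈ I.accept i, k < I.edgeRank (i, h)} : Finset _) ⊆ X.image Prod.fst
  · exact min_le_of_right_le ((card_le_card hsub).trans card_image_le)
  · obtain ⟨i, hi, hiX⟩ := not_subset.1 hsub
    obtain ⟨h, hacc, hk⟩ := (mem_filter_univ i).1 hi
    exact min_le_of_left_le ((le_card_filter_edgeRank_le hacc hk).trans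
      (card_accept_filter_le_card_of_maximal hX hiX))

/-- a matching maximizing the number of agents matched by an edge of rank
at most `k = ⌊n^(1/3)/2⌋` matches at least `min k (Σ_{i>k} |L_i|)` such agents, where
`L_i` counts agents matched by rank-`i` edges in an arbitrary matching `μ₁`. -/
theorem boundX {n : ℕ} (hn : 8 ≤ n) (I : OSMInstance n)
    (μ₁ : Finset (Fin n × Fin n)) (hμ₁ : I.IsMatching μ₁)
    (k : ℕ) (hk : k = ⌊(n : ℝ) ^ ((1 : ℝ) / 3) / 2⌋₊)
    (μ₂ : Finset (Fin n × Fin n)) (hμ₂ : I.IsMatching μ₂)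
    (hmax : ∀ μ'', I.IsMatching μ'' →
      (μ''.filter (fun e => I.edgeRank e ≤ k)).card ≤
        (μ₂.filter (fun e => I.edgeRank e ≤ k)).card) :
    min k ((μ₁.filter (fun e => k + 1 ≤ I.edgeRank e ∧ I.edgeRank e ≤ n)).card) ≤
      (μ₂.filter (fun e => I.edgeRank e ≤ k)).card := by
  have hL : #{e ∈ μ₁ | k + 1 ≤ I.edgeRank e ∧ I.edgeRank e ≤ n} ≤
      #{i | ∃ h ∈ I.accept i, k < I.edgeRank (i, h)} :=
    (hμ₁.subset (filter_subset _ _)).card_le_card_agents (p := fun e => k < I.edgeRank e)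
      fun _ he => (mem_filter.1 he).2.1
  exact (min_le_min_left k hL).trans (boundX_general (hμ₂.maximal_filter hmax))
end

section
/- Let a_i be an agent with acceptable set A_i among n objects and let v_i be a unit-sum valuation of a_i consistent with a_i's weak order, i.e., v_i : H → [0,1] with v_i(h) = 0 for h ∉ A_i, h ⪰_i h' iff v_i(h) ≥ v_i(h') for h, h' ∈ A_i, and Σ_{h ∈ A_i} v_i(h) = 1. Suppose v_i(h) < 1/n^{1/3} for every h ∈ A_i of rank 1 for a_i. Then for every j ∈ {1,...,⌊n^{1/3}/2⌋} and every h ∈ A_i of rank j for a_i, v_i(h) ≥ 1/(2n). -/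
open Finset
open scoped Classical

/-! Write `c` for `n ^ (1 / 3)` and split the acceptable objects at `h`. Fewer than `c / 2` of them
are worth more than `h`, by the bound on the rank, and each of these is worth at most `1 / c`, so
together they are worth at most `1 / 2`. The others, at most `n` in number, are each worth at most
`v h` and must account for the remaining `1 / 2`. -/

section ValueRank

variable {α β : Type*}

/-- The rank of `h` in `A` under the weak order represented by the valuation `v`: one plus the
number of objects of `A` worth more than `h`. Tied objects share a rank. -/
def valueRank [LinearOrder β] (A : Finset α) (v : α → β) (h : α) : ℕ :=
  #{x ∈ A | v h < v x} + 1

theorem card_strictPref_add_one_eq_valueRank [LinearOrder β] {A : Finset α} {v : α → β}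
    {pref : α → α → Prop} (hcons : ∀ x ∈ A, ∀ y ∈ A, (pref x y ↔ v y ≤ v x)) {h : α} (hh : h ∈ A) :
    #{x ∈ A | pref x h ∧ ¬ pref h x} + 1 = valueRank A v h := by
  have hiff : ∀ x ∈ A, (pref x h ∧ ¬ pref h x ↔ v h < v x) := fun x hx => by
    rw [hcons x hx h hh, hcons h hh x hx, lt_iff_le_not_ge]
  rw [valueRank, filter_congr hiff]

theorem valueRank_eq_one_iff [LinearOrder β] {A : Finset α} {v : α → β} {h : α} :
    valueRank A v h = 1 ↔ ∀ x ∈ A, v x ≤ v h := by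
  simp only [valueRank, Nat.add_eq_right, card_eq_zero, filter_eq_empty_iff, not_lt]

theorem le_of_forall_valueRank_eq_one_le [LinearOrder β] {A : Finset α} {v : α → β} {M : β}
    (htop : ∀ x ∈ A, valueRank A v x = 1 → v x ≤ M) {x : α} (hx : x ∈ A) : v x ≤ M := by
  obtain ⟨m, hm, hmax⟩ := A.exists_max_image v ⟨x, hx⟩
  exact (hmax x hx).trans (htop m hm (valueRank_eq_one_iff.mpr hmax))

theorem sum_le_card_lt_nsmul_add_card_le_nsmul [AddCommMonoid β] [LinearOrder β]
    [IsOrderedAddMonoid β] {A : Finset α} {v : α → β} {M : β} (hM : ∀ x ∈ A, v x ≤ M) (h : α) :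
    ∑ x ∈ A, v x ≤ #{x ∈ A | v h < v x} • M + #{x ∈ A | v x ≤ v h} • v h := by
  rw [← sum_filter_add_sum_filter_not A (v h < v ·)]
  simp only [not_lt]
  gcongr
  · exact sum_le_card_nsmul _ _ _ fun x hx => hM x (mem_of_mem_filter x hx)
  · exact sum_le_card_nsmul _ _ _ fun x hx => (mem_filter.mp hx).2

end ValueRank

section UnitSum

variable {α 𝕜 : Type*} [Field 𝕜] [LinearOrder 𝕜] [IsStrictOrderedRing 𝕜]

theorem one_div_two_mul_card_le_of_valueRank_le {A : Finset α} {v : α → 𝕜}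
    (hsum : 1 ≤ ∑ x ∈ A, v x) {c : 𝕜} (hle : ∀ x ∈ A, v x ≤ 1 / c) {h : α}
    (hrank : (valueRank A v h : 𝕜) ≤ c / 2) : 1 / (2 * (#A : 𝕜)) ≤ v h := by
  set B := {x ∈ A | v h < v x}
  set C := {x ∈ A | v x ≤ v h}
  have hB : (#B : 𝕜) + 1 ≤ c / 2 := by exact_mod_cast hrank
  have hc : 0 < c := by linarith [Nat.cast_nonneg (α := 𝕜) #B]
  have hsplit : 1 ≤ #B * (1 / c) + #C * v h := by
    simpa only [nsmul_eq_mul] using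
      hsum.trans (sum_le_card_lt_nsmul_add_card_le_nsmul hle h)
  have hBsum : #B * (1 / c) ≤ 1 / 2 := by
    rw [mul_one_div, div_le_iff₀ hc]
    linarith
  have hCsum : 1 / 2 ≤ #C * v h := by linarith
  have hvh : 0 < v h := pos_of_mul_pos_right (one_half_pos.trans_le hCsum) (Nat.cast_nonneg _)
  have hAsum : 1 / 2 ≤ v h * #A := calc
    1 / 2 ≤ #C * v h := hCsum
    _ ≤ #A * v h := by gcongr; exact filter_subset _ A
    _ = v h * #A := mul_comm _ _
  rw [← div_div]
  exact div_le_of_le_mul₀ (Nat.cast_nonneg _) hvh.le hAsum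

theorem unitSum_value_lower_bound_general {A : Finset α} {pref : α → α → Prop} {v : α → 𝕜}
    (hcons : ∀ x ∈ A, ∀ y ∈ A, (pref x y ↔ v y ≤ v x)) (hsum : 1 ≤ ∑ x ∈ A, v x)
    {rank : α → ℕ} (hrank : ∀ x ∈ A, rank x = #{y ∈ A | pref y x ∧ ¬ pref x y} + 1)
    {c : 𝕜} (htop : ∀ x ∈ A, rank x = 1 → v x ≤ 1 / c)
    {h : α} (hh : h ∈ A) (hle : (rank h : 𝕜) ≤ c / 2) : 1 / (2 * (#A : 𝕜)) ≤ v h := by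
  have hvalueRank : ∀ x ∈ A, rank x = valueRank A v x := fun x hx =>
    (hrank x hx).trans (card_strictPref_add_one_eq_valueRank hcons hx)
  have htop' : ∀ x ∈ A, valueRank A v x = 1 → v x ≤ 1 / c := fun x hx hx1 =>
    htop x hx ((hvalueRank x hx).trans hx1)
  exact one_div_two_mul_card_le_of_valueRank_le hsum
    (fun _ hx => le_of_forall_valueRank_eq_one_le htop' hx) (hvalueRank h hh ▸ hle)

end UnitSum

/-- for a unit-sum agent whose rank-1 objects are all worth less than
`1 / n^(1/3)`, every object of rank at most `⌊n^(1/3)/2⌋` is worth at least `1/(2n)`. -/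
theorem unitSum_value_lower_bound {n : ℕ}
    (A : Finset (Fin n)) (hA : A.Nonempty)
    (pref : Fin n → Fin n → Prop)
    (hrefl : ∀ h ∈ A, pref h h)
    (htrans : ∀ h₁ ∈ A, ∀ h₂ ∈ A, ∀ h₃ ∈ A, pref h₁ h₂ → pref h₂ h₃ → pref h₁ h₃)
    (htotal : ∀ h₁ ∈ A, ∀ h₂ ∈ A, pref h₁ h₂ ∨ pref h₂ h₁)
    (v : Fin n → ℝ)
    (hv01 : ∀ h, 0 ≤ v h ∧ v h ≤ 1)
    (hv0 : ∀ h ∉ A, v h = 0)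
    (hcons : ∀ h ∈ A, ∀ h' ∈ A, (pref h h' ↔ v h' ≤ v h))
    (hsum : ∑ h ∈ A, v h = 1)
    (rank : Fin n → ℕ)
    (hrank : ∀ h, rank h = (A.filter (fun h' => pref h' h ∧ ¬ pref h h')).card + 1)
    (htop : ∀ h ∈ A, rank h = 1 → v h < 1 / (n : ℝ) ^ ((1 : ℝ) / 3)) :
    ∀ j, 1 ≤ j → j ≤ ⌊(n : ℝ) ^ ((1 : ℝ) / 3) / 2⌋₊ →
      ∀ h ∈ A, rank h = j → 1 / (2 * (n : ℝ)) ≤ v h := by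
  rintro _ hj hjc h hh rfl
  have hrank_le : (rank h : ℝ) ≤ (n : ℝ) ^ ((1 : ℝ) / 3) / 2 :=
    (Nat.le_floor_iff' (Nat.one_le_iff_ne_zero.mp hj)).mp hjc
  calc 1 / (2 * (n : ℝ)) ≤ 1 / (2 * (#A : ℝ)) := by gcongr; exact card_finset_fin_le A
    _ ≤ v h := unitSum_value_lower_bound_general hcons hsum.ge (fun x _ => hrank x)
      (fun x hx hx1 => (htop x hx hx1).le) hh hrank_le
end

section
/- Let I be an instance with n ≥ 2 agents and n objects, and let μ be a matching of G_I that is Pareto optimal, or a priority-p matching for some p ∈ 𝕡. Let k be a positive integer with k ≤ ⌊n/2⌋, let B_i denote the set of agents matched by a rank-i edge of μ, and let B = ∪_{i=1}^{k} B_i. Then |B| ≥ min{k, |μ|}. -/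
open Finset
open scoped Classical

/-!
Neither a Pareto optimal matching nor one of maximum weight, for weights that respect the strict
preferences, can be improved by redistributing objects among its agents. So in such a matching `μ`
an agent never strictly prefers a free object to their own, and no group of agents can trade along a
cycle of envy. Now let `B` be the set of edges of rank at most `k`, and suppose `|B| < k` and
`|B| < |μ|`. The agent of an edge outside `B` strictly prefers at least `k > |B|` objects to their
own, hence one that `B` does not use. This object is not free, so it belongs to another edge of
`μ \ B`. Following envy inside the nonempty set `μ \ B` must close a cycle, a contradiction.
-/

theorem injOn_update {α β : Type*} [DecidableEq α] {f : α → β} {s : Set α} (hf : Set.InjOn f s)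
    {a : α} {b : β} (hb : b ∉ f '' s) : Set.InjOn (Function.update f a b) s := by
  have hne : ∀ c ∈ s, f c ≠ b := fun c hc hcb => hb ⟨c, hc, hcb⟩
  intro c hc d hd hcd
  simp only [Function.update_apply] at hcd
  split_ifs at hcd with hca hda hda
  · rw [hca, hda]
  · exact absurd hcd.symm (hne d hd)
  · exact absurd hcd (hne c hc)
  · exact hf hc hd hcd

theorem nonempty_periodicPts_of_finite {α : Type*} [Finite α] [Nonempty α] (f : α → α) :
    (Function.periodicPts f).Nonempty := by
  obtain ⟨x⟩ := ‹Nonempty α›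
  obtain ⟨a, b, hlt, hab⟩ : ∃ a b : ℕ, a < b ∧ f^[a] x = f^[b] x := by
    obtain ⟨a, b, hne, hab⟩ := Finite.exists_ne_map_eq_of_infinite fun m : ℕ => f^[m] x
    rcases hne.lt_or_gt with hlt | hlt
    exacts [⟨a, b, hlt, hab⟩, ⟨b, a, hlt, hab.symm⟩]
  refine ⟨f^[a] x, Function.mk_mem_periodicPts (Nat.sub_pos_of_lt hlt) ?_⟩
  rw [Function.IsPeriodicPt, Function.IsFixedPt, ← Function.iterate_add_apply,
    Nat.sub_add_cancel hlt.le, hab]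

-- A choice function for `r` permutes its periodic points.
theorem exists_perm_of_leftTotal {α : Type*} [Finite α] [Nonempty α] {r : α → α → Prop}
    (hr : Relator.LeftTotal r) :
    ∃ σ : Equiv.Perm α, (∀ a, σ a = a ∨ r a (σ a)) ∧ ∃ a, r a (σ a) := by
  choose f hf using hr
  let σ : Equiv.Perm α := Equiv.Perm.ofSubtype ((Function.bijOn_periodicPts f).equiv f)
  have hσ : ∀ a ∈ Function.periodicPts f, σ a = f a := fun a ha =>
    Equiv.Perm.ofSubtype_apply_of_mem _ ha
  refine ⟨σ, fun a => ?_, ?_⟩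
  · by_cases ha : a ∈ Function.periodicPts f
    · exact Or.inr (hσ a ha ▸ hf a)
    · exact Or.inl (Equiv.Perm.ofSubtype_apply_of_not_mem _ ha)
  · obtain ⟨a, ha⟩ := nonempty_periodicPts_of_finite f
    exact ⟨a, hσ a ha ▸ hf a⟩

namespace OSMInstance

variable {n : ℕ} {I : OSMInstance n} {μ : Finset (Fin n × Fin n)} {e : Fin n × Fin n} {x : Fin n}

/-- The acceptable objects that the agent of `e` strictly prefers to the object of `e`. -/
noncomputable def betterObjects (I : OSMInstance n) (e : Fin n × Fin n) : Finset (Fin n) :=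
  (I.accept e.1).filter fun x => I.strictPref e.1 x e.2

theorem mem_betterObjects : x ∈ I.betterObjects e ↔ x ∈ I.accept e.1 ∧ I.strictPref e.1 x e.2 :=
  Finset.mem_filter

theorem edgeRank_eq_card_betterObjects_add_one (I : OSMInstance n) (e : Fin n × Fin n) :
    I.edgeRank e = (I.betterObjects e).card + 1 :=
  rfl

theorem notMem_betterObjects_self (he : e.2 ∈ I.accept e.1) : e.2 ∉ I.betterObjects e := fun h =>
  (mem_betterObjects.1 h).2.2 (I.pref_refl e.1 e.2 he)

theorem betterObjects_ssubset (he : e.2 ∈ I.accept e.1) (hx : x ∈ I.betterObjects e) :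
    I.betterObjects (e.1, x) ⊂ I.betterObjects e := by
  obtain ⟨hxacc, hxe, -⟩ := mem_betterObjects.1 hx
  refine Finset.ssubset_iff_subset_ne.2
    ⟨fun y hy => ?_, fun heq => notMem_betterObjects_self (e := (e.1, x)) hxacc (heq ▸ hx)⟩
  obtain ⟨hyacc, hyx, hxy⟩ := mem_betterObjects.1 hy
  exact mem_betterObjects.2 ⟨hyacc, I.pref_trans e.1 y x e.2 hyacc hxacc he hyx hxe,
    fun hey => hxy (I.pref_trans e.1 x e.2 y hxacc he hyacc hxe hey)⟩

theorem edgeRank_lt_edgeRank (he : e.2 ∈ I.accept e.1) (hx : x ∈ I.betterObjects e) :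
    I.edgeRank (e.1, x) < I.edgeRank e := by
  simpa only [edgeRank_eq_card_betterObjects_add_one, add_lt_add_iff_right] using
    Finset.card_lt_card (betterObjects_ssubset he hx)

theorem lt_edgeRank_iff {k : ℕ} : k < I.edgeRank e ↔ k ≤ (I.betterObjects e).card := by
  rw [edgeRank_eq_card_betterObjects_add_one, Nat.lt_succ_iff]

theorem edgeRank_mem_Icc (he : e.2 ∈ I.accept e.1) : I.edgeRank e ∈ Set.Icc 1 n := by
  have hlt : (I.betterObjects e).card < n := by
    simpa only [Fintype.card_fin] using Finset.card_lt_univ_of_notMem (notMem_betterObjects_self he)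
  exact ⟨lt_edgeRank_iff.2 (Nat.zero_le _), hlt⟩

/-- Edge weights under which every agent's acceptable edge weighs strictly less than the edge to
any object that the agent strictly prefers. -/
def RespectsStrictPref (I : OSMInstance n) (w : Fin n × Fin n → ℝ) : Prop :=
  ∀ e, e.2 ∈ I.accept e.1 → ∀ x ∈ I.betterObjects e, w e < w (e.1, x)

theorem respectsStrictPref_of_strictAntiOn {p : ℕ → ℝ} (hp : StrictAntiOn p (Set.Icc 1 n)) :
    I.RespectsStrictPref fun e => p (I.edgeRank e) := fun _ he _ hx =>
  hp (edgeRank_mem_Icc (mem_betterObjects.1 hx).1) (edgeRank_mem_Icc he)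
    (edgeRank_lt_edgeRank he hx)

/-- A redistribution of objects among the agents matched by `μ` that changes the allocation of some
agents, all of them for the better. The agent of `e ∈ μ` receives `g e` in place of `e.2`; the
values of `g` outside `μ` are irrelevant. -/
structure IsImprovingReassignment (I : OSMInstance n) (μ : Finset (Fin n × Fin n))
    (g : Fin n × Fin n → Fin n) : Prop where
  injOn : Set.InjOn g μ
  eq_or_mem_betterObjects : ∀ e ∈ μ, g e = e.2 ∨ g e ∈ I.betterObjects e
  exists_mem_betterObjects : ∃ e ∈ μ, g e ∈ I.betterObjects e

theorem IsImprovingReassignment.isMatching_image {g : Fin n × Fin n → Fin n}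
    (hg : I.IsImprovingReassignment μ g) (hμ : I.IsMatching μ) :
    I.IsMatching (μ.image fun e => (e.1, g e)) := by
  refine ⟨?_, ?_, ?_⟩ <;> simp only [Finset.forall_mem_image]
  · intro e he
    rcases hg.eq_or_mem_betterObjects e he with heq | hbetter
    · exact heq ▸ hμ.1 e he
    · exact (mem_betterObjects.1 hbetter).1
  · intro e he e' he' h
    rw [hμ.2.1 e he e' he' h]
  · intro e he e' he' h
    rw [hg.injOn he he' h]

theorem ParetoOptimal.not_isImprovingReassignment (hμ : I.ParetoOptimal μ)
    (g : Fin n × Fin n → Fin n) : ¬ I.IsImprovingReassignment μ g := by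
  intro hg
  have hmem : ∀ e ∈ μ, (e.1, g e) ∈ μ.image fun e => (e.1, g e) := fun e he =>
    Finset.mem_image_of_mem _ he
  have hweak : ∀ e ∈ μ, I.pref e.1 (g e) e.2 := fun e he => by
    rcases hg.eq_or_mem_betterObjects e he with heq | hbetter
    · exact heq ▸ I.pref_refl e.1 e.2 (hμ.1.1 e he)
    · exact (mem_betterObjects.1 hbetter).2.1
  obtain ⟨e, he, hbetter⟩ := hg.exists_mem_betterObjects
  refine hμ.2 ⟨_, hg.isMatching_image hμ.1, fun i => ?_, e.1,
    Or.inr ⟨e.2, g e, he, hmem e he, (mem_betterObjects.1 hbetter).2⟩⟩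
  refine or_iff_not_imp_left.2 fun hmatched => ?_
  obtain ⟨h, hih⟩ : ∃ h, (i, h) ∈ μ := by simpa only [Unmatched, not_forall, not_not] using hmatched
  exact ⟨h, g (i, h), hih, hmem _ hih, hweak _ hih⟩

theorem IsMaxWeightMatching.not_isImprovingReassignment {w : Fin n × Fin n → ℝ}
    (hμ : I.IsMaxWeightMatching w μ) (hw : I.RespectsStrictPref w) (g : Fin n × Fin n → Fin n) :
    ¬ I.IsImprovingReassignment μ g := by
  intro hg
  have hle : ∀ e ∈ μ, w e ≤ w (e.1, g e) := fun e he => by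
    rcases hg.eq_or_mem_betterObjects e he with heq | hbetter
    · rw [heq]
    · exact (hw e (hμ.1.1 e he) _ hbetter).le
  obtain ⟨e, he, hbetter⟩ := hg.exists_mem_betterObjects
  refine (hμ.2 _ (hg.isMatching_image hμ.1)).not_gt ?_
  calc weightSum w μ
      < ∑ e ∈ μ, w (e.1, g e) := Finset.sum_lt_sum hle ⟨e, he, hw e (hμ.1.1 e he) _ hbetter⟩
    _ = weightSum w (μ.image fun e => (e.1, g e)) :=
      (Finset.sum_image fun a ha b hb hab => hg.injOn ha hb (congrArg Prod.snd hab)).symm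

theorem IsMatching.isImprovingReassignment_update (hμ : I.IsMatching μ) (he : e ∈ μ)
    (hx : x ∈ I.betterObjects e) (hfree : x ∉ μ.image Prod.snd) :
    I.IsImprovingReassignment μ (Function.update Prod.snd e x) where
  injOn := injOn_update (fun a ha b hb hab => hμ.2.2 a ha b hb hab) <| by
    rwa [← Finset.coe_image, Finset.mem_coe]
  eq_or_mem_betterObjects a _ := by
    rcases eq_or_ne a e with rfl | hae
    · exact Or.inr (by rwa [Function.update_self])
    · exact Or.inl (Function.update_of_ne hae ..)
  exists_mem_betterObjects := ⟨e, he, by rwa [Function.update_self]⟩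

theorem IsMatching.exists_isImprovingReassignment_of_envy (hμ : I.IsMatching μ)
    {C : Finset (Fin n × Fin n)} (hCμ : C ⊆ μ) (hC : C.Nonempty)
    (henvy : ∀ e ∈ C, ∃ e' ∈ C, e'.2 ∈ I.betterObjects e) :
    ∃ g, I.IsImprovingReassignment μ g := by
  have : Nonempty {e // e ∈ C} := hC.to_subtype
  obtain ⟨σ, hσ, ⟨a, haC⟩, ha⟩ := exists_perm_of_leftTotal
    (r := fun e e' : {e // e ∈ C} => e'.1.2 ∈ I.betterObjects e)
    (fun ⟨e, he⟩ => let ⟨e', he', h⟩ := henvy e he; ⟨⟨e', he'⟩, h⟩)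
  let τ : Equiv.Perm (Fin n × Fin n) := σ.ofSubtype
  have hτ : ∀ e (he : e ∈ C), τ e = σ ⟨e, he⟩ := fun _ he =>
    Equiv.Perm.ofSubtype_apply_of_mem σ he
  have hτ' : ∀ e ∉ C, τ e = e := fun _ he => Equiv.Perm.ofSubtype_apply_of_not_mem σ he
  have hτμ : ∀ e ∈ μ, τ e ∈ μ := fun e he => by
    by_cases heC : e ∈ C
    · exact hτ e heC ▸ hCμ (σ ⟨e, heC⟩).2
    · rwa [hτ' e heC]
  refine ⟨fun e => (τ e).2, ?_, fun e _ => ?_, a, hCμ haC, hτ a haC ▸ ha⟩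
  · exact fun e he e' he' h => τ.injective (hμ.2.2 _ (hτμ e he) _ (hτμ e' he') h)
  · by_cases heC : e ∈ C
    · exact (hσ ⟨e, heC⟩).imp (fun h => by rw [hτ e heC, h]) (fun h => by rwa [hτ e heC])
    · exact Or.inl (by rw [hτ' e heC])

theorem IsMatching.min_le_card_filter_edgeRank_le (hμ : I.IsMatching μ)
    (hopt : ∀ g, ¬ I.IsImprovingReassignment μ g) (k : ℕ) :
    min k μ.card ≤ (μ.filter fun e => I.edgeRank e ≤ k).card := by
  by_contra! hlt
  obtain ⟨hk, hcard⟩ := lt_min_iff.1 hlt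
  set B := μ.filter fun e => I.edgeRank e ≤ k
  have hne : (μ \ B).Nonempty := Finset.sdiff_nonempty.2 fun hsub =>
    hcard.not_ge (Finset.card_le_card hsub)
  have henvy : ∀ e ∈ μ \ B, ∃ e' ∈ μ \ B, e'.2 ∈ I.betterObjects e := by
    intro e he
    obtain ⟨heμ, heB⟩ := Finset.mem_sdiff.1 he
    have hrank : k < I.edgeRank e := by
      by_contra! hle
      exact heB (Finset.mem_filter.2 ⟨heμ, hle⟩)
    have hB : (B.image Prod.snd).card < (I.betterObjects e).card := calc
      (B.image Prod.snd).card ≤ B.card := Finset.card_image_le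
      _ < k := hk
      _ ≤ (I.betterObjects e).card := lt_edgeRank_iff.1 hrank
    obtain ⟨x, hx, hxB⟩ := Finset.exists_mem_notMem_of_card_lt_card hB
    have hxμ : x ∈ μ.image Prod.snd := by
      by_contra hfree
      exact hopt _ (hμ.isImprovingReassignment_update heμ hx hfree)
    obtain ⟨e', he', rfl⟩ := Finset.mem_image.1 hxμ
    exact ⟨e', Finset.mem_sdiff.2 ⟨he', fun h => hxB (Finset.mem_image_of_mem _ h)⟩, hx⟩
  obtain ⟨g, hg⟩ := hμ.exists_isImprovingReassignment_of_envy Finset.sdiff_subset hne henvy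
  exact hopt g hg

end OSMInstance

theorem strictAntiOn_of_mem_prioritySet {n : ℕ} {p : ℕ → ℝ} (hp : p ∈ PrioritySet n) :
    StrictAntiOn p (Set.Icc 1 n) := by
  rintro r ⟨hr1, -⟩ s ⟨-, hsn⟩ hrs
  have hn : (1 : ℝ) < n := by exact_mod_cast hr1.trans_lt (hrs.trans_le hsn)
  rcases hp with rfl | rfl | rfl
  · exact pow_lt_pow_right₀ hn (by omega)
  · exact add_lt_add_right (pow_lt_pow_right₀ hn (by omega)) _
  · have hpow : (n : ℝ) ^ (r - 1) < (n : ℝ) ^ (s - 1) := pow_lt_pow_right₀ hn (by omega)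
    simp only [pFairVec]
    linarith

theorem boundB_general {n : ℕ} (I : OSMInstance n) (μ : Finset (Fin n × Fin n))
    (hμ : I.ParetoOptimal μ ∨ ∃ w, I.RespectsStrictPref w ∧ I.IsMaxWeightMatching w μ) (k : ℕ) :
    min k μ.card ≤ (μ.filter (fun e => I.edgeRank e ≤ k)).card := by
  obtain hμ | ⟨w, hw, hμ⟩ := hμ
  · exact hμ.1.min_le_card_filter_edgeRank_le hμ.not_isImprovingReassignment k
  · exact hμ.1.min_le_card_filter_edgeRank_le (hμ.not_isImprovingReassignment hw) k

/-- in a Pareto optimal or priority-`p` matching (`p ∈ 𝕡`), at least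
`min k |μ|` agents are matched by an edge of rank at most `k`, for `1 ≤ k ≤ ⌊n/2⌋`. -/
theorem boundB {n : ℕ} (hn : 2 ≤ n) (I : OSMInstance n)
    (μ : Finset (Fin n × Fin n))
    (hμ : I.ParetoOptimal μ ∨ ∃ p ∈ PrioritySet n, I.IsPriorityMatching p μ)
    (k : ℕ) (hk1 : 1 ≤ k) (hk2 : k ≤ n / 2) :
    min k μ.card ≤ (μ.filter (fun e => I.edgeRank e ≤ k)).card := by
  exact boundB_general I μ (hμ.imp_right fun ⟨_, hp, h⟩ =>
    ⟨_, OSMInstance.respectsStrictPref_of_strictAntiOn (strictAntiOn_of_mem_prioritySet hp), h⟩) k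
end

section
/- There exists a constant C > 0 such that for every n and every instance I with n agents and n objects, there exist a threshold matrix T assigning to each pair (a_i, h_j) a value T(a_i, h_j) ∈ [0,1] and an outcome map f from {0,1}-valued n×n answer matrices to matchings of G_I, such that for every unit-sum valuation profile v consistent with I, letting b_v be the answer matrix with b_v(i,j) = 1 iff v_i(h_j) ≥ T(a_i, h_j): the matching f(b_v) is Pareto optimal and SW(μ* | v) ≤ C·n^{2/3}·SW(f(b_v) | v), where μ* is a Pareto optimal matching of maximum social welfare under v. -/
open Finset
open scoped Classical

/-!
Sort the objects of each agent by decreasing preference, counting positions from `0`, and put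
`a = n ^ (1 / 3)`. Ask whether the value of the object in position `p` is at least `1 / a` if
`p = 0`, and at least `1 / ((p + 1) * a ^ 2)` otherwise. Given the answers, weight every edge by
the least value it can have, take a matching of maximum weight `W` and Pareto improve it; the
result has welfare at least `W`.

A sorted unit-sum vector has entry at most `1 / (p + 1)` in position `p`, so an edge answered "yes"
or in position `0` is worth at most `a ^ 2` times its weight, and every other edge is worth at most
`1 / a ^ 2`. If some agent answers "yes" in position `0`, then `W ≥ 1 / a`, while the edges
answered "no" beyond position `0` contribute at most `n / a ^ 2 = a ≤ a ^ 2 * W` to any matching.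

Otherwise every agent has all values below `1 / a`, hence its first `a / 2` values are at least
`1 / (2 * n)`. If moreover it answers "no" in a position in `[1, a / 4]`, even its first `a ^ 2 / 4`
values are. Hall's theorem turns these bounds into matchings showing that `1 ≤ 4 * a ^ 2 * W` and
that there are at most `8 * a ^ 4 * W` agents with such an early "no". For the other agents, an
edge answered "no" beyond position `0` lies beyond `a / 4` and is worth at most `4 / n`.
-/

section SortedVectors

variable {n : ℕ}

theorem succ_nsmul_le_sum_of_antitone {M : Type*} [AddCommMonoid M] [PartialOrder M]
    [IsOrderedAddMonoid M] {u : Fin n → M} (hu : Antitone u) (h0 : ∀ p, 0 ≤ u p) (p : Fin n) :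
    ((p : ℕ) + 1) • u p ≤ ∑ q, u q :=
  calc ((p : ℕ) + 1) • u p = #(Finset.Iic p) • u p := by rw [Fin.card_Iic]
    _ ≤ ∑ q ∈ Finset.Iic p, u q :=
      Finset.card_nsmul_le_sum _ _ _ fun _ hq => hu (Finset.mem_Iic.1 hq)
    _ ≤ ∑ q, u q :=
      Finset.sum_le_sum_of_subset_of_nonneg (Finset.subset_univ _) fun q _ _ => h0 q

theorem sum_le_two_levels_of_antitone {M : Type*} [AddCommMonoid M] [PartialOrder M]
    [IsOrderedAddMonoid M] [NeZero n] {u : Fin n → M} (hu : Antitone u) (h0 : ∀ p, 0 ≤ u p)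
    (p q : Fin n) : ∑ x, u x ≤ (q : ℕ) • u 0 + (p : ℕ) • u q + n • u p := by
  have hlevel (x : Fin n) :
      u x ≤ (if x < q then u 0 else 0) + (if x < p then u q else 0) + u p := by
    have hfirst : 0 ≤ if x < q then u 0 else 0 := by split_ifs <;> simp [h0]
    have hsecond : 0 ≤ if x < p then u q else 0 := by split_ifs <;> simp [h0]
    rcases lt_or_ge x q with hxq | hqx
    · rw [if_pos hxq, add_assoc]
      exact le_add_of_le_of_nonneg (hu (Fin.zero_le x)) (add_nonneg hsecond (h0 p))
    rcases lt_or_ge x p with hxp | hpx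
    · rw [if_pos hxp]
      exact le_add_of_le_of_nonneg (le_add_of_nonneg_of_le hfirst (hu hqx)) (h0 p)
    · exact le_add_of_nonneg_of_le (add_nonneg hfirst hsecond) (hu hpx)
  refine (Finset.sum_le_sum fun x _ => hlevel x).trans_eq ?_
  simp only [Finset.sum_add_distrib, ← Finset.sum_filter, Finset.sum_const,
    Finset.filter_gt_eq_Iio, Fin.card_Iio, Finset.card_univ, Fintype.card_fin]

variable {u : Fin n → ℝ}

theorem le_one_div_succ_of_mem_stdSimplex (hu : Antitone u) (hs : u ∈ stdSimplex ℝ (Fin n))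
    (p : Fin n) : u p ≤ 1 / ((p : ℝ) + 1) := by
  have h := succ_nsmul_le_sum_of_antitone hu hs.1 p
  rw [hs.2, nsmul_eq_mul] at h
  rw [le_div_iff₀' (by positivity)]
  exact_mod_cast h

theorem one_div_le_first_of_mem_stdSimplex [NeZero n] (hu : Antitone u)
    (hs : u ∈ stdSimplex ℝ (Fin n)) : 1 / (n : ℝ) ≤ u 0 := by
  rw [div_le_iff₀' (Nat.cast_pos.2 (NeZero.pos n)), ← hs.2]
  simpa using Finset.sum_le_card_nsmul Finset.univ u (u 0) fun x _ => hu (Fin.zero_le x)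

theorem one_div_two_mul_le_of_mem_stdSimplex [NeZero n] (hu : Antitone u)
    (hs : u ∈ stdSimplex ℝ (Fin n)) {p q : Fin n} (hpq : q * u 0 + p * u q ≤ 1 / 2) :
    1 / (2 * (n : ℝ)) ≤ u p := by
  have hn : (0 : ℝ) < n := Nat.cast_pos.2 (NeZero.pos n)
  have h := sum_le_two_levels_of_antitone hu hs.1 p q
  simp only [hs.2, nsmul_eq_mul] at h
  rw [div_le_iff₀ (by positivity)]
  linarith

end SortedVectors

theorem exists_injective_of_card_le_card {ι α : Type*} [Fintype ι] {S : ι → Finset α}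
    (hS : ∀ i, Fintype.card ι ≤ #(S i)) : ∃ g : ι → α, Function.Injective g ∧ ∀ i, g i ∈ S i := by
  refine (Finset.all_card_le_biUnion_card_iff_exists_injective S).1 fun s => ?_
  rcases s.eq_empty_or_nonempty with rfl | ⟨i, hi⟩
  · simp
  · exact (s.card_le_univ.trans (hS i)).trans
      (Finset.card_le_card (Finset.subset_biUnion_of_mem S hi))

namespace OSMInstance

variable {n : ℕ} {I : OSMInstance n} {v : Fin n → Fin n → ℝ} {μ μ' : Finset (Fin n × Fin n)}

/-! ### Matchings and Pareto improvements -/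

theorem isMatching_empty (I : OSMInstance n) : I.IsMatching ∅ := by simp [IsMatching]

theorem isMatching_singleton {e : Fin n × Fin n} (he : e.2 ∈ I.accept e.1) : I.IsMatching {e} := by
  simpa [IsMatching] using he

theorem isMatching_image_of_injective {K : Finset (Fin n)} {g : K → Fin n}
    (hg : Function.Injective g) (hacc : ∀ i : K, g i ∈ I.accept i) :
    I.IsMatching (Finset.univ.image fun i : K => ((i : Fin n), g i)) := by
  refine ⟨?_, ?_, ?_⟩ <;> simp only [Finset.forall_mem_image, Finset.mem_univ, forall_const]
  · exact hacc
  · intro i j hij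
    rw [Subtype.ext hij]
  · intro i j hij
    rw [hg hij]

theorem IsMatching.obj_unique (hμ : I.IsMatching μ) {i h h' : Fin n} (hh : (i, h) ∈ μ)
    (hh' : (i, h') ∈ μ) : h = h' :=
  congrArg Prod.snd (hμ.2.1 _ hh _ hh' rfl)

theorem IsMatching.sum_le_sum_agent (hμ : I.IsMatching μ) {w : Fin n × Fin n → ℝ} {c : Fin n → ℝ}
    (hc : ∀ i, 0 ≤ c i) (hw : ∀ e ∈ μ, w e ≤ c e.1) : ∑ e ∈ μ, w e ≤ ∑ i, c i :=
  calc ∑ e ∈ μ, w e ≤ ∑ e ∈ μ, c e.1 := Finset.sum_le_sum hw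
    _ = ∑ i ∈ μ.image Prod.fst, c i := (Finset.sum_image hμ.2.1).symm
    _ ≤ ∑ i, c i :=
      Finset.sum_le_sum_of_subset_of_nonneg (Finset.subset_univ _) fun i _ _ => hc i

theorem IsMatching.weakImprove_self (hμ : I.IsMatching μ) (i : Fin n) : I.WeakImprove μ μ i := by
  by_cases hu : I.Unmatched μ i
  · exact Or.inl hu
  · obtain ⟨h, hh⟩ : ∃ h, (i, h) ∈ μ := by simpa [Unmatched] using hu
    exact Or.inr ⟨h, h, hh, hh, I.pref_refl i h (hμ.1 _ hh)⟩

theorem WeakImprove.exists_pref (hμ : I.IsMatching μ) {i h : Fin n}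
    (hw : I.WeakImprove μ' μ i) (hh : (i, h) ∈ μ) : ∃ h', (i, h') ∈ μ' ∧ I.pref i h' h := by
  rcases hw with hu | ⟨k, h', hk, hh', hpref⟩
  · exact absurd hh (hu h)
  · obtain rfl := hμ.obj_unique hh hk
    exact ⟨h', hh', hpref⟩

theorem WeakImprove.trans {μ₁ μ₂ μ₃ : Finset (Fin n × Fin n)} (h₁ : I.IsMatching μ₁)
    (h₂ : I.IsMatching μ₂) (h₃ : I.IsMatching μ₃) {i : Fin n} (h₂₁ : I.WeakImprove μ₂ μ₁ i)
    (h₃₂ : I.WeakImprove μ₃ μ₂ i) : I.WeakImprove μ₃ μ₁ i := by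
  rcases h₂₁ with hu | ⟨a, b, ha, hb, hba⟩
  · exact Or.inl hu
  · obtain ⟨c, hc, hcb⟩ := h₃₂.exists_pref h₂ hb
    exact Or.inr ⟨a, c, ha, hc,
      I.pref_trans i c b a (h₃.1 _ hc) (h₂.1 _ hb) (h₁.1 _ ha) hcb hba⟩

theorem StrictImprove.not_weakImprove (hμ : I.IsMatching μ) (hμ' : I.IsMatching μ') {i : Fin n}
    (hs : I.StrictImprove μ' μ i) : ¬ I.WeakImprove μ μ' i := by
  intro hw
  rcases hs with ⟨hu, h', hh'⟩ | ⟨h, h', hh, hh', hpref⟩ <;>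
    obtain ⟨k, hk, hkpref⟩ := hw.exists_pref hμ' hh'
  · exact hu k hk
  · obtain rfl := hμ.obj_unique hh hk
    exact hpref.2 hkpref

theorem IsMatching.exists_paretoOptimal_weakImprove (hμ : I.IsMatching μ) :
    ∃ μ', I.ParetoOptimal μ' ∧ ∀ i, I.WeakImprove μ' μ i := by
  let _ : Preorder {ν : Finset (Fin n × Fin n) // I.IsMatching ν} :=
    { le := fun ν ν' => ∀ i, I.WeakImprove ν'.1 ν.1 i
      lt := fun ν ν' => (∀ i, I.WeakImprove ν'.1 ν.1 i) ∧ ¬ ∀ i, I.WeakImprove ν.1 ν'.1 i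
      lt_iff_le_not_ge := fun _ _ => Iff.rfl
      le_refl := fun ν i => ν.2.weakImprove_self i
      le_trans := fun ν₁ ν₂ ν₃ h₁₂ h₂₃ i => .trans ν₁.2 ν₂.2 ν₃.2 (h₁₂ i) (h₂₃ i) }
  obtain ⟨m, hm, hmax⟩ := Finite.exists_le_maximal (p := fun _ => True)
    (a := (⟨μ, hμ⟩ : {ν : Finset (Fin n × Fin n) // I.IsMatching ν})) trivial
  refine ⟨m.1, ⟨m.2, ?_⟩, hm⟩
  rintro ⟨ν, hν, hw, i, hs⟩
  exact hs.not_weakImprove m.2 hν (hmax.2 (y := ⟨ν, hν⟩) trivial hw i)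

theorem Consistent.SW_le_of_weakImprove (hv : I.Consistent v) (hμ : I.IsMatching μ)
    (hμ' : I.IsMatching μ') (hw : ∀ i, I.WeakImprove μ' μ i) : I.SW v μ ≤ I.SW v μ' := by
  have hnonneg (e : Fin n × Fin n) : 0 ≤ v e.1 e.2 := (hv.1 _ _).1
  let agentValue (i : Fin n) : ℝ := ∑ e ∈ μ' with e.1 = i, v e.1 e.2
  have hle : ∀ e ∈ μ, v e.1 e.2 ≤ agentValue e.1 := by
    rintro ⟨i, h⟩ hh
    obtain ⟨h', hh', hpref⟩ := (hw i).exists_pref hμ hh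
    calc v i h ≤ v i h' := (hv.2.2 i h' h (hμ'.1 _ hh') (hμ.1 _ hh)).1 hpref
      _ ≤ agentValue i :=
        Finset.single_le_sum (s := {e ∈ μ' | e.1 = i}) (f := fun e : Fin n × Fin n => v e.1 e.2)
          (fun e _ => hnonneg e) (Finset.mem_filter.2 ⟨hh', rfl⟩)
  calc I.SW v μ ≤ ∑ i, agentValue i :=
        hμ.sum_le_sum_agent (fun i => Finset.sum_nonneg fun e _ => hnonneg e) hle
    _ = I.SW v μ' := Finset.sum_fiberwise μ' Prod.fst _

/-! ### Maximum-weight matchings -/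

theorem exists_isMaxWeightMatching (I : OSMInstance n) (w : Fin n × Fin n → ℝ) :
    ∃ μ, I.IsMaxWeightMatching w μ := by
  obtain ⟨μ, hμ, hmax⟩ := Set.exists_max_image {μ | I.IsMatching μ} (weightSum w)
    (Set.toFinite _) ⟨∅, I.isMatching_empty⟩
  exact ⟨μ, hμ, hmax⟩

section MaxWeight

variable {w : Fin n × Fin n → ℝ}

theorem IsMaxWeightMatching.weightSum_nonneg (hμ : I.IsMaxWeightMatching w μ) :
    0 ≤ weightSum w μ := by
  simpa [weightSum] using hμ.2 ∅ I.isMatching_empty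

theorem IsMaxWeightMatching.le_weightSum (hμ : I.IsMaxWeightMatching w μ) {e : Fin n × Fin n}
    (he : e.2 ∈ I.accept e.1) : w e ≤ weightSum w μ := by
  simpa [weightSum] using hμ.2 {e} (isMatching_singleton he)

theorem IsMaxWeightMatching.card_mul_le (hμ : I.IsMaxWeightMatching w μ) {K : Finset (Fin n)}
    {S : Fin n → Finset (Fin n)} (hS : ∀ i ∈ K, #K ≤ #(S i)) {c : ℝ}
    (hacc : ∀ i ∈ K, ∀ h ∈ S i, h ∈ I.accept i) (hw : ∀ i ∈ K, ∀ h ∈ S i, c ≤ w (i, h)) :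
    #K * c ≤ weightSum w μ := by
  obtain ⟨g, hg, hgS⟩ := exists_injective_of_card_le_card (S := fun i : K => S i)
    fun i => by simpa using hS i i.2
  have hmatch := isMatching_image_of_injective hg fun i => hacc i i.2 _ (hgS i)
  have hinj : Function.Injective fun i : K => ((i : Fin n), g i) := fun i j hij =>
    hg (congrArg Prod.snd hij)
  calc #K * c ≤ ∑ i : K, w (i, g i) := by
        simpa using Finset.card_nsmul_le_sum Finset.univ (fun i : K => w (i, g i)) c
          fun i _ => hw i i.2 _ (hgS i)
    _ = weightSum w (Finset.univ.image fun i : K => ((i : Fin n), g i)) :=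
      (Finset.sum_image hinj.injOn).symm
    _ ≤ weightSum w μ := hμ.2 _ hmatch

theorem IsMaxWeightMatching.min_mul_le (hμ : I.IsMaxWeightMatching w μ)
    (σ : Fin n → Equiv.Perm (Fin n)) {K : Finset (Fin n)} {t c : ℝ} (hc : 0 ≤ c)
    (hacc : ∀ i ∈ K, ∀ p : Fin n, (p : ℝ) < t → σ i p ∈ I.accept i)
    (hw : ∀ i ∈ K, ∀ p : Fin n, (p : ℝ) < t → c ≤ w (i, σ i p)) :
    min (#K : ℝ) t * c ≤ weightSum w μ := by
  obtain ⟨K', hK'K, hK'⟩ := Finset.exists_subset_card_eq (min_le_left #K ⌈t⌉₊)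
  have hKn : #K ≤ n := by simpa using K.card_le_univ
  let S (i : Fin n) : Finset (Fin n) :=
    (Finset.univ.filter fun p : Fin n => (p : ℕ) < ⌈t⌉₊).map (σ i).toEmbedding
  have hS {i h : Fin n} (hh : h ∈ S i) : ∃ p : Fin n, (p : ℝ) < t ∧ σ i p = h := by
    simpa only [S, Finset.mem_map_equiv, Finset.mem_filter_univ, Nat.lt_ceil] using
      ⟨(σ i).symm h, by simpa [S, Nat.lt_ceil] using hh, (σ i).apply_symm_apply h⟩
  have hcard (i : Fin n) : #K' ≤ #(S i) := by
    rw [hK', Finset.card_map, Fin.card_filter_val_lt]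
    exact min_le_min_right _ hKn
  calc min (#K : ℝ) t * c ≤ #K' * c := by
        rw [hK', Nat.cast_min]
        gcongr
        exact Nat.le_ceil t
    _ ≤ weightSum w μ := by
      refine hμ.card_mul_le (fun i _ => hcard i) ?_ ?_ <;> intro i hi h hh <;>
        obtain ⟨p, hp, rfl⟩ := hS hh
      · exact hacc i (hK'K hi) p hp
      · exact hw i (hK'K hi) p hp

end MaxWeight

/-! ### Positions in the preference orders -/

theorem edgeRank_lt_edgeRank_s13 {i h h' : Fin n} (hh : h ∈ I.accept i) (hh' : h' ∈ I.accept i)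
    (hlt : I.strictPref i h h') : I.edgeRank (i, h) < I.edgeRank (i, h') := by
  refine Nat.succ_lt_succ (Finset.card_lt_card ((Finset.ssubset_iff_of_subset ?_).2 ⟨h, ?_, ?_⟩))
  · intro x hx
    obtain ⟨hxa, hxh, hhx⟩ := Finset.mem_filter.1 hx
    exact Finset.mem_filter.2 ⟨hxa, I.pref_trans i x h h' hxa hh hh' hxh hlt.1,
      fun hh'x => hhx (I.pref_trans i h h' x hh hh' hxa hlt.1 hh'x)⟩
  · exact Finset.mem_filter.2 ⟨hh, hlt⟩
  · exact fun hmem => (Finset.mem_filter.1 hmem).2.2 (I.pref_refl i h hh)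

/-- The key by which agent `i` sorts the objects: the rank of an acceptable object, and `⊤` for an
unacceptable one. -/
noncomputable def sortKey (I : OSMInstance n) (i h : Fin n) : ℕ∞ :=
  if h ∈ I.accept i then I.edgeRank (i, h) else ⊤

/-- `I.objAt i p` is the object in position `p`, counted from `0`, when the objects are listed by
decreasing preference of agent `i`, ties being broken arbitrarily and unacceptable objects coming
last. -/
noncomputable def objAt (I : OSMInstance n) (i : Fin n) : Equiv.Perm (Fin n) :=
  Tuple.sort (I.sortKey i)

theorem Consistent.mem_accept_of_pos (hv : I.Consistent v) {i h : Fin n} (hpos : 0 < v i h) :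
    h ∈ I.accept i :=
  by_contra fun hh => hpos.ne' (hv.2.1 i h hh)

theorem Consistent.strictPref_of_lt (hv : I.Consistent v) {i h h' : Fin n} (hh : h ∈ I.accept i)
    (hh' : h' ∈ I.accept i) (hlt : v i h' < v i h) : I.strictPref i h h' :=
  ⟨(hv.2.2 i h h' hh hh').2 hlt.le, fun hpref => hlt.not_ge ((hv.2.2 i h' h hh' hh).1 hpref)⟩

theorem Consistent.le_of_sortKey_le (hv : I.Consistent v) {i h h' : Fin n}
    (hkey : I.sortKey i h ≤ I.sortKey i h') : v i h' ≤ v i h := by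
  by_contra! hlt
  have hh' : h' ∈ I.accept i := hv.mem_accept_of_pos ((hv.1 i h).1.trans_lt hlt)
  have hh : h ∈ I.accept i := by
    by_contra hh
    simp [sortKey, hh, hh'] at hkey
  have hrank := edgeRank_lt_edgeRank_s13 hh' hh (hv.strictPref_of_lt hh' hh hlt)
  simp only [sortKey, hh, hh', if_true, Nat.cast_le] at hkey
  exact hrank.not_ge hkey

theorem Consistent.antitone_objAt (hv : I.Consistent v) (i : Fin n) :
    Antitone fun p => v i (I.objAt i p) :=
  fun _ _ hpq => hv.le_of_sortKey_le (Tuple.monotone_sort (I.sortKey i) hpq)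

theorem UnitSum.objAt_mem_stdSimplex (hs : I.UnitSum v) (hv : I.Consistent v) (i : Fin n) :
    (fun p => v i (I.objAt i p)) ∈ stdSimplex ℝ (Fin n) := by
  refine ⟨fun p => (hv.1 _ _).1, ?_⟩
  rw [Equiv.sum_comp (I.objAt i) (v i), ← hs i]
  exact (Finset.sum_subset (Finset.subset_univ _) fun h _ hh => hv.2.1 i h hh).symm

/-! ### Certified values -/

/-- The unit-sum profiles that are possible when the threshold queries `T` are answered by `b`. -/
def compatibleProfiles (I : OSMInstance n) (T : Fin n → Fin n → ℝ) (b : Fin n → Fin n → Bool) :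
    Set (Fin n → Fin n → ℝ) :=
  {v | I.Consistent v ∧ I.UnitSum v ∧ ∀ i j, b i j = true ↔ T i j ≤ v i j}

/-- The largest lower bound on the value of the edge `e` that follows from the answers `b`; it is
the junk value `0` if no profile is compatible with `b`. -/
noncomputable def certifiedValue (I : OSMInstance n) (T : Fin n → Fin n → ℝ)
    (b : Fin n → Fin n → Bool) (e : Fin n × Fin n) : ℝ :=
  ⨅ v : I.compatibleProfiles T b, v.1 e.1 e.2

/-- A matching of maximum certified value. -/
noncomputable def certifiedMatching (I : OSMInstance n) (T : Fin n → Fin n → ℝ)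
    (b : Fin n → Fin n → Bool) : Finset (Fin n × Fin n) :=
  (I.exists_isMaxWeightMatching (I.certifiedValue T b)).choose

/-- The largest welfare that the sum of the certified values of the edges guarantees for a
matching. -/
noncomputable def certifiedWelfare (I : OSMInstance n) (T : Fin n → Fin n → ℝ)
    (b : Fin n → Fin n → Bool) : ℝ :=
  weightSum (I.certifiedValue T b) (I.certifiedMatching T b)

section Certified

variable {T : Fin n → Fin n → ℝ} {b : Fin n → Fin n → Bool}

theorem certifiedMatching_isMaxWeightMatching (I : OSMInstance n) (T : Fin n → Fin n → ℝ)
    (b : Fin n → Fin n → Bool) :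
    I.IsMaxWeightMatching (I.certifiedValue T b) (I.certifiedMatching T b) :=
  (I.exists_isMaxWeightMatching (I.certifiedValue T b)).choose_spec

theorem lt_of_mem_compatibleProfiles (hv : v ∈ I.compatibleProfiles T b) {i j : Fin n}
    (hno : b i j = false) : v i j < T i j := by
  simpa [hno] using hv.2.2 i j

theorem certifiedValue_nonneg (I : OSMInstance n) (T : Fin n → Fin n → ℝ)
    (b : Fin n → Fin n → Bool) (e : Fin n × Fin n) : 0 ≤ I.certifiedValue T b e :=
  Real.iInf_nonneg fun v => (v.2.1.1 _ _).1

theorem certifiedValue_le (hv : v ∈ I.compatibleProfiles T b) (e : Fin n × Fin n) :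
    I.certifiedValue T b e ≤ v e.1 e.2 :=
  ciInf_le (f := fun v : I.compatibleProfiles T b => v.1 e.1 e.2)
    ⟨0, by rintro _ ⟨v, rfl⟩; exact (v.2.1.1 _ _).1⟩ ⟨v, hv⟩

theorem le_certifiedValue (hb : (I.compatibleProfiles T b).Nonempty) {e : Fin n × Fin n} {c : ℝ}
    (hc : ∀ v ∈ I.compatibleProfiles T b, c ≤ v e.1 e.2) : c ≤ I.certifiedValue T b e :=
  have := hb.to_subtype
  le_ciInf fun v => hc v.1 v.2

theorem mem_accept_of_certifiedValue_pos (hb : (I.compatibleProfiles T b).Nonempty)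
    {e : Fin n × Fin n} (he : 0 < I.certifiedValue T b e) : e.2 ∈ I.accept e.1 :=
  have ⟨_, hv⟩ := hb
  hv.1.mem_accept_of_pos (he.trans_le (certifiedValue_le hv e))

theorem threshold_le_certifiedValue (hb : (I.compatibleProfiles T b).Nonempty) {i j : Fin n}
    (hyes : b i j = true) : T i j ≤ I.certifiedValue T b (i, j) :=
  le_certifiedValue hb fun _ hv => (hv.2.2 i j).1 hyes

theorem certifiedWelfare_le_SW (hv : v ∈ I.compatibleProfiles T b) :
    I.certifiedWelfare T b ≤ I.SW v (I.certifiedMatching T b) :=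
  Finset.sum_le_sum fun e _ => certifiedValue_le hv e

theorem IsMatching.SW_le_mul_certifiedWelfare_add (hμ : I.IsMatching μ) {r : ℝ} (hr : 0 ≤ r)
    {c : Fin n → ℝ} (hc : ∀ i, 0 ≤ c i)
    (hvc : ∀ i j, v i j ≤ r * I.certifiedValue T b (i, j) + c i) :
    I.SW v μ ≤ r * I.certifiedWelfare T b + ∑ i, c i :=
  calc I.SW v μ ≤ ∑ e ∈ μ, (r * I.certifiedValue T b e + c e.1) :=
        Finset.sum_le_sum fun e _ => hvc e.1 e.2
    _ = r * weightSum (I.certifiedValue T b) μ + ∑ e ∈ μ, c e.1 := by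
      rw [Finset.sum_add_distrib, ← Finset.mul_sum, weightSum]
    _ ≤ r * I.certifiedWelfare T b + ∑ i, c i :=
      add_le_add
        (mul_le_mul_of_nonneg_left ((I.certifiedMatching_isMaxWeightMatching T b).2 μ hμ) hr)
        (hμ.sum_le_sum_agent hc fun _ _ => le_rfl)

end Certified

/-! ### Position thresholds -/

/-- The threshold for the object in position `p`, counted from `0`, of each agent. The parameter
`a` is to be the cube root of the number of agents. -/
noncomputable def positionThreshold (a : ℝ) (p : ℕ) : ℝ :=
  if p = 0 then 1 / a else 1 / ((p + 1) * a ^ 2)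

/-- The threshold matrix whose entry for an agent and an object is the threshold for the position
of the object in the preference order of the agent. -/
noncomputable def thresholdMatrix (I : OSMInstance n) (a : ℝ) (i j : Fin n) : ℝ :=
  positionThreshold a ((I.objAt i).symm j : Fin n)

theorem thresholdMatrix_objAt (I : OSMInstance n) (a : ℝ) (i p : Fin n) :
    I.thresholdMatrix a i (I.objAt i p) = positionThreshold a p := by
  rw [thresholdMatrix, Equiv.symm_apply_apply]

theorem positionThreshold_mem_Icc {a : ℝ} (ha : 1 ≤ a) (p : ℕ) :
    positionThreshold a p ∈ Set.Icc 0 1 := by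
  have ha₀ : 0 < a := one_pos.trans_le ha
  unfold positionThreshold
  split_ifs
  · exact ⟨by positivity, (div_le_one ha₀).2 ha⟩
  · refine ⟨by positivity, (div_le_one (by positivity)).2 ?_⟩
    exact one_le_mul_of_one_le_of_one_le (by simp) (one_le_pow₀ ha)

theorem positionThreshold_le_one_div_sq {a : ℝ} (ha : 0 < a) {p : ℕ} (hp : p ≠ 0) :
    positionThreshold a p ≤ 1 / a ^ 2 := by
  rw [positionThreshold, if_neg hp]
  exact one_div_le_one_div_of_le (by positivity)
    (le_mul_of_one_le_left (by positivity) (by simp))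

theorem positionThreshold_le_four_div_cube {a : ℝ} (ha : 0 < a) {p : ℕ} (hp : a / 4 < p) :
    positionThreshold a p ≤ 4 / a ^ 3 := by
  have hp₀ : p ≠ 0 := by
    rintro rfl
    rw [Nat.cast_zero] at hp
    linarith
  rw [positionThreshold, if_neg hp₀, div_le_div_iff₀ (by positivity) (by positivity)]
  calc 1 * a ^ 3 = a * a ^ 2 := by ring
    _ ≤ 4 * (p + 1) * a ^ 2 := by gcongr; linarith
    _ = 4 * ((p + 1) * a ^ 2) := by ring

theorem one_div_succ_le_sq_mul_positionThreshold {a : ℝ} (ha : 1 ≤ a) (p : ℕ) :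
    1 / ((p : ℝ) + 1) ≤ a ^ 2 * positionThreshold a p := by
  have : 0 < a := one_pos.trans_le ha
  unfold positionThreshold
  split_ifs with hp
  · rw [hp, show a ^ 2 * (1 / a) = a by field_simp]
    simpa using ha
  · refine le_of_eq ?_
    field_simp

section PositionQueries

variable {a : ℝ} {b : Fin n → Fin n → Bool}

theorem value_le_sq_mul_certifiedValue_of_yes
    (hv : v ∈ I.compatibleProfiles (I.thresholdMatrix a) b) (ha : 1 ≤ a) {i p : Fin n}
    (hyes : b i (I.objAt i p) = true) :
    v i (I.objAt i p) ≤ a ^ 2 * I.certifiedValue (I.thresholdMatrix a) b (i, I.objAt i p) :=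
  calc v i (I.objAt i p) ≤ 1 / ((p : ℝ) + 1) :=
        le_one_div_succ_of_mem_stdSimplex (hv.1.antitone_objAt i)
          (hv.2.1.objAt_mem_stdSimplex hv.1 i) p
    _ ≤ a ^ 2 * positionThreshold a p := one_div_succ_le_sq_mul_positionThreshold ha p
    _ = a ^ 2 * I.thresholdMatrix a i (I.objAt i p) := by rw [thresholdMatrix_objAt]
    _ ≤ a ^ 2 * I.certifiedValue (I.thresholdMatrix a) b (i, I.objAt i p) := by
      gcongr
      exact threshold_le_certifiedValue ⟨v, hv⟩ hyes

theorem value_le_positionThreshold_of_no (hv : v ∈ I.compatibleProfiles (I.thresholdMatrix a) b)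
    {i p : Fin n} (hno : b i (I.objAt i p) = false) :
    v i (I.objAt i p) ≤ positionThreshold a p :=
  (lt_of_mem_compatibleProfiles hv hno).le.trans_eq (I.thresholdMatrix_objAt a i p)

variable [NeZero n]

theorem value_first_le_of_no (hv : v ∈ I.compatibleProfiles (I.thresholdMatrix a) b) {i : Fin n}
    (hno : b i (I.objAt i 0) = false) : v i (I.objAt i 0) ≤ 1 / a := by
  simpa [positionThreshold] using value_le_positionThreshold_of_no hv hno

theorem one_div_le_certifiedValue_first {T : Fin n → Fin n → ℝ}
    (hb : (I.compatibleProfiles T b).Nonempty) (i : Fin n) :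
    1 / (n : ℝ) ≤ I.certifiedValue T b (i, I.objAt i 0) :=
  le_certifiedValue hb fun _ hv => one_div_le_first_of_mem_stdSimplex (hv.1.antitone_objAt i)
    (hv.2.1.objAt_mem_stdSimplex hv.1 i)

theorem value_le_sq_mul_certifiedValue_of_first
    (hv : v ∈ I.compatibleProfiles (I.thresholdMatrix a) b) (ha : 1 ≤ a) (han : a ^ 3 = n)
    (i : Fin n) :
    v i (I.objAt i 0) ≤ a ^ 2 * I.certifiedValue (I.thresholdMatrix a) b (i, I.objAt i 0) := by
  cases hfirst : b i (I.objAt i 0) with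
  | true => exact value_le_sq_mul_certifiedValue_of_yes hv ha hfirst
  | false =>
    calc v i (I.objAt i 0) ≤ 1 / a := value_first_le_of_no hv hfirst
      _ = a ^ 2 * (1 / (n : ℝ)) := by
        rw [← han]
        field_simp
      _ ≤ a ^ 2 * I.certifiedValue (I.thresholdMatrix a) b (i, I.objAt i 0) := by
        gcongr
        exact one_div_le_certifiedValue_first ⟨v, hv⟩ i

/-- With `q = 0` only the answer in position `0` is used. -/
theorem one_div_two_mul_le_certifiedValue_of_no
    (hb : (I.compatibleProfiles (I.thresholdMatrix a) b).Nonempty) {i p q : Fin n}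
    (hfirst : b i (I.objAt i 0) = false) (hno : b i (I.objAt i q) = false)
    (hpq : q * (1 / a) + p * positionThreshold a q ≤ 1 / 2) :
    1 / (2 * (n : ℝ)) ≤ I.certifiedValue (I.thresholdMatrix a) b (i, I.objAt i p) := by
  refine le_certifiedValue hb fun v hv => one_div_two_mul_le_of_mem_stdSimplex
    (hv.1.antitone_objAt i) (hv.2.1.objAt_mem_stdSimplex hv.1 i) (q := q) (le_trans ?_ hpq)
  gcongr
  · exact value_first_le_of_no hv hfirst
  · exact value_le_positionThreshold_of_no hv hno

theorem value_le_sq_mul_certifiedValue_add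
    (hv : v ∈ I.compatibleProfiles (I.thresholdMatrix a) b) (ha : 1 ≤ a) (han : a ^ 3 = n)
    {i : Fin n} {c : ℝ} (hc : 0 ≤ c)
    (hno : ∀ p : Fin n, p ≠ 0 → b i (I.objAt i p) = false → positionThreshold a p ≤ c)
    (j : Fin n) : v i j ≤ a ^ 2 * I.certifiedValue (I.thresholdMatrix a) b (i, j) + c := by
  obtain ⟨p, rfl⟩ := (I.objAt i).surjective j
  rcases eq_or_ne p 0 with rfl | hp
  · exact le_add_of_le_of_nonneg (value_le_sq_mul_certifiedValue_of_first hv ha han i) hc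
  cases hb : b i (I.objAt i p) with
  | true => exact le_add_of_le_of_nonneg (value_le_sq_mul_certifiedValue_of_yes hv ha hb) hc
  | false =>
    have hpos : 0 ≤ a ^ 2 * I.certifiedValue (I.thresholdMatrix a) b (i, I.objAt i p) :=
      mul_nonneg (sq_nonneg a) (certifiedValue_nonneg I _ b _)
    exact le_add_of_nonneg_of_le hpos
      ((value_le_positionThreshold_of_no hv hb).trans (hno p hp hb))

/-! ### The approximation ratio -/

theorem one_div_le_certifiedWelfare_of_first_yes
    (hb : (I.compatibleProfiles (I.thresholdMatrix a) b).Nonempty) (ha : 0 < a) {i : Fin n}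
    (hyes : b i (I.objAt i 0) = true) : 1 / a ≤ I.certifiedWelfare (I.thresholdMatrix a) b := by
  have hle : 1 / a ≤ I.certifiedValue (I.thresholdMatrix a) b (i, I.objAt i 0) := by
    simpa [thresholdMatrix_objAt, positionThreshold] using threshold_le_certifiedValue hb hyes
  have hacc : I.objAt i 0 ∈ I.accept i :=
    mem_accept_of_certifiedValue_pos hb ((one_div_pos.2 ha).trans_le hle)
  exact hle.trans ((I.certifiedMatching_isMaxWeightMatching _ b).le_weightSum hacc)

theorem SW_le_of_first_yes (hv : v ∈ I.compatibleProfiles (I.thresholdMatrix a) b) (ha : 1 ≤ a)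
    (han : a ^ 3 = n) {i : Fin n} (hyes : b i (I.objAt i 0) = true) (hμ : I.IsMatching μ) :
    I.SW v μ ≤ 2 * a ^ 2 * I.certifiedWelfare (I.thresholdMatrix a) b := by
  have ha₀ : 0 < a := one_pos.trans_le ha
  set W := I.certifiedWelfare (I.thresholdMatrix a) b
  have hW : 1 / a ≤ W := one_div_le_certifiedWelfare_of_first_yes ⟨v, hv⟩ ha₀ hyes
  have hc : (0 : ℝ) ≤ 1 / a ^ 2 := by positivity
  calc I.SW v μ ≤ a ^ 2 * W + ∑ _i : Fin n, 1 / a ^ 2 :=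
        hμ.SW_le_mul_certifiedWelfare_add (sq_nonneg a) (fun _ => hc) fun _ =>
          value_le_sq_mul_certifiedValue_add hv ha han hc fun _ hp _ =>
            positionThreshold_le_one_div_sq ha₀ (Fin.val_ne_zero_iff.2 hp)
    _ = a ^ 2 * W + a ^ 2 * (1 / a) := by
      rw [Finset.sum_const, Finset.card_univ, Fintype.card_fin, nsmul_eq_mul, ← han]
      field_simp
    _ ≤ a ^ 2 * W + a ^ 2 * W := by gcongr
    _ = 2 * a ^ 2 * W := by ring

theorem min_div_le_certifiedWelfare
    (hb : (I.compatibleProfiles (I.thresholdMatrix a) b).Nonempty) {K : Finset (Fin n)} {t : ℝ}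
    (hK : ∀ i ∈ K, ∀ p : Fin n, (p : ℝ) < t →
      1 / (2 * (n : ℝ)) ≤ I.certifiedValue (I.thresholdMatrix a) b (i, I.objAt i p)) :
    min (#K : ℝ) t * (1 / (2 * n)) ≤ I.certifiedWelfare (I.thresholdMatrix a) b := by
  have hn : (0 : ℝ) < n := Nat.cast_pos.2 (NeZero.pos n)
  have hc : 0 < 1 / (2 * (n : ℝ)) := by positivity
  exact (I.certifiedMatching_isMaxWeightMatching _ b).min_mul_le I.objAt hc.le
    (fun i hi p hp => mem_accept_of_certifiedValue_pos hb (hc.trans_le (hK i hi p hp))) hK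

theorem one_le_mul_certifiedWelfare_of_forall_first_no
    (hb : (I.compatibleProfiles (I.thresholdMatrix a) b).Nonempty) (ha : 1 ≤ a) (han : a ^ 3 = n)
    (hfirst : ∀ i, b i (I.objAt i 0) = false) :
    1 ≤ 4 * a ^ 2 * I.certifiedWelfare (I.thresholdMatrix a) b := by
  have : 0 < a := one_pos.trans_le ha
  have hcert (i p : Fin n) (hp : (p : ℝ) < a / 2) :
      1 / (2 * (n : ℝ)) ≤ I.certifiedValue (I.thresholdMatrix a) b (i, I.objAt i p) := by
    refine one_div_two_mul_le_certifiedValue_of_no hb (hfirst i) (hfirst i) ?_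
    calc ((0 : Fin n) : ℕ) * (1 / a) + p * positionThreshold a (0 : Fin n) = p * (1 / a) := by
          simp [positionThreshold]
      _ ≤ a / 2 * (1 / a) := by gcongr
      _ = 1 / 2 := by field_simp
  have hW := min_div_le_certifiedWelfare hb (K := Finset.univ) fun i _ p hp => hcert i p hp
  have hhalf : a / 2 ≤ n := by
    rw [← han]
    linarith [le_self_pow₀ ha three_ne_zero]
  rw [Finset.card_univ, Fintype.card_fin, min_eq_right hhalf, ← han] at hW
  calc 1 = 4 * a ^ 2 * (a / 2 * (1 / (2 * a ^ 3))) := by field_simp; norm_num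
    _ ≤ 4 * a ^ 2 * I.certifiedWelfare (I.thresholdMatrix a) b := by gcongr

/-- The agents that answer "no" in some position in `[1, a / 4]`. -/
noncomputable def earlyNoAgents (I : OSMInstance n) (a : ℝ) (b : Fin n → Fin n → Bool) :
    Finset (Fin n) :=
  {i | ∃ q : Fin n, q ≠ 0 ∧ (q : ℝ) ≤ a / 4 ∧ b i (I.objAt i q) = false}

theorem card_earlyNoAgents_le (hb : (I.compatibleProfiles (I.thresholdMatrix a) b).Nonempty)
    (ha : 1 ≤ a) (han : a ^ 3 = n) (hfirst : ∀ i, b i (I.objAt i 0) = false) :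
    #(I.earlyNoAgents a b) ≤ 8 * a ^ 4 * I.certifiedWelfare (I.thresholdMatrix a) b := by
  have ha₀ : 0 < a := one_pos.trans_le ha
  set F := I.earlyNoAgents a b
  set W := I.certifiedWelfare (I.thresholdMatrix a) b
  have hcert : ∀ i ∈ F, ∀ p : Fin n, (p : ℝ) < a ^ 2 / 4 →
      1 / (2 * (n : ℝ)) ≤ I.certifiedValue (I.thresholdMatrix a) b (i, I.objAt i p) := by
    intro i hi p hp
    obtain ⟨q, hq₀, hqa, hno⟩ := (Finset.mem_filter.1 hi).2
    refine one_div_two_mul_le_certifiedValue_of_no hb (hfirst i) hno ?_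
    calc q * (1 / a) + p * positionThreshold a q ≤ a / 4 * (1 / a) + a ^ 2 / 4 * (1 / a ^ 2) := by
          gcongr
          · exact (positionThreshold_mem_Icc ha _).1
          · exact positionThreshold_le_one_div_sq ha₀ (Fin.val_ne_zero_iff.2 hq₀)
      _ = 1 / 2 := by field_simp; norm_num
  have hW := min_div_le_certifiedWelfare hb hcert
  have hmin : #F / (4 * a) ≤ min (#F : ℝ) (a ^ 2 / 4) := by
    have hcard : (#F : ℝ) ≤ a ^ 3 := by
      rw [han]
      exact_mod_cast F.card_le_univ.trans_eq (Fintype.card_fin n)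
    refine le_min (div_le_self (by positivity) (by linarith)) ?_
    rw [div_le_iff₀ (by positivity)]
    linarith
  calc (#F : ℝ) = 8 * a ^ 4 * (#F / (4 * a) * (1 / (2 * a ^ 3))) := by field_simp; ring
    _ ≤ 8 * a ^ 4 * (min (#F : ℝ) (a ^ 2 / 4) * (1 / (2 * a ^ 3))) := by gcongr
    _ ≤ 8 * a ^ 4 * W := by
      rw [han]
      gcongr

theorem positionThreshold_le_of_no (ha : 0 < a) {i p : Fin n} (hp : p ≠ 0)
    (hno : b i (I.objAt i p) = false) :
    positionThreshold a p ≤ 4 / a ^ 3 + if i ∈ I.earlyNoAgents a b then 1 / a ^ 2 else 0 := by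
  split_ifs with hi
  · exact le_add_of_nonneg_of_le (by positivity)
      (positionThreshold_le_one_div_sq ha (Fin.val_ne_zero_iff.2 hp))
  · have hlate : a / 4 < p := by
      by_contra! hearly
      exact hi (Finset.mem_filter.2 ⟨Finset.mem_univ i, p, hp, hearly, hno⟩)
    simpa using positionThreshold_le_four_div_cube ha hlate

theorem SW_le_of_forall_first_no (hv : v ∈ I.compatibleProfiles (I.thresholdMatrix a) b)
    (ha : 1 ≤ a) (han : a ^ 3 = n) (hfirst : ∀ i, b i (I.objAt i 0) = false)
    (hμ : I.IsMatching μ) :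
    I.SW v μ ≤ 25 * a ^ 2 * I.certifiedWelfare (I.thresholdMatrix a) b := by
  have ha₀ : 0 < a := one_pos.trans_le ha
  set F := I.earlyNoAgents a b
  set W := I.certifiedWelfare (I.thresholdMatrix a) b
  let c (i : Fin n) : ℝ := 4 / a ^ 3 + if i ∈ F then 1 / a ^ 2 else 0
  have hc (i : Fin n) : 0 ≤ c i := by positivity
  have hsum : ∑ i, c i = 4 + #F / a ^ 2 := by
    simp only [c, Finset.sum_add_distrib, Finset.sum_ite_mem, Finset.univ_inter, Finset.sum_const,
      Finset.card_univ, Fintype.card_fin, nsmul_eq_mul, ← han]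
    field_simp
  have hF : #F / a ^ 2 ≤ 8 * a ^ 2 * W := by
    rw [div_le_iff₀ (by positivity)]
    exact (card_earlyNoAgents_le ⟨v, hv⟩ ha han hfirst).trans_eq (by ring)
  have hone : 1 ≤ 4 * a ^ 2 * W :=
    one_le_mul_certifiedWelfare_of_forall_first_no ⟨v, hv⟩ ha han hfirst
  calc I.SW v μ ≤ a ^ 2 * W + ∑ i, c i :=
        hμ.SW_le_mul_certifiedWelfare_add (sq_nonneg a) hc fun i =>
          value_le_sq_mul_certifiedValue_add hv ha han (hc i) fun _ =>
            positionThreshold_le_of_no ha₀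
    _ ≤ 25 * a ^ 2 * W := by
      rw [hsum]
      linarith

theorem SW_le_mul_certifiedWelfare (hv : v ∈ I.compatibleProfiles (I.thresholdMatrix a) b)
    (ha : 1 ≤ a) (han : a ^ 3 = n) (hμ : I.IsMatching μ) :
    I.SW v μ ≤ 25 * a ^ 2 * I.certifiedWelfare (I.thresholdMatrix a) b := by
  by_cases hfirst : ∃ i, b i (I.objAt i 0) = true
  · obtain ⟨i, hyes⟩ := hfirst
    refine (SW_le_of_first_yes hv ha han hyes hμ).trans ?_
    have hW := (I.certifiedMatching_isMaxWeightMatching (I.thresholdMatrix a) b).weightSum_nonneg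
    exact mul_le_mul_of_nonneg_right (by gcongr; norm_num) hW
  · exact SW_le_of_forall_first_no hv ha han (by simpa using hfirst) hμ

end PositionQueries

end OSMInstance

theorem nonadaptive_PO_unitSum_upper_bound_general {n : ℕ} (I : OSMInstance n) :
    ∃ T : Fin n → Fin n → ℝ, (∀ i j, 0 ≤ T i j ∧ T i j ≤ 1) ∧
      ∃ f : (Fin n → Fin n → Bool) → Finset (Fin n × Fin n),
        (∀ b, I.ParetoOptimal (f b)) ∧
        ∀ v : Fin n → Fin n → ℝ, I.Consistent v → I.UnitSum v →
          ∀ μ, I.IsMatching μ →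
            I.SW v μ ≤
              25 * (n : ℝ) ^ ((2 : ℝ) / 3) *
                I.SW v (f (fun i j => decide (T i j ≤ v i j))) := by
  set a : ℝ := (n : ℝ) ^ ((1 : ℝ) / 3) with ha
  have hone (hn : 0 < n) : 1 ≤ a := Real.one_le_rpow (Nat.one_le_cast.2 hn) (by norm_num)
  have hcube : a ^ 3 = n := by rw [ha, ← Real.rpow_mul_natCast n.cast_nonneg]; norm_num
  have hsq : (n : ℝ) ^ ((2 : ℝ) / 3) = a ^ 2 := by
    rw [ha, ← Real.rpow_mul_natCast n.cast_nonneg]; norm_num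
  choose f hf hfM using fun b =>
    (I.certifiedMatching_isMaxWeightMatching (I.thresholdMatrix a) b).1
      |>.exists_paretoOptimal_weakImprove
  refine ⟨I.thresholdMatrix a,
    fun i _ => OSMInstance.positionThreshold_mem_Icc (hone i.pos) _, f, hf, fun v hv hs μ hμ => ?_⟩
  rcases n.eq_zero_or_pos with rfl | hn
  · simp [OSMInstance.SW, Finset.eq_empty_of_isEmpty]
  have := NeZero.of_pos hn
  set b : Fin n → Fin n → Bool := fun i j => decide (I.thresholdMatrix a i j ≤ v i j)
  have hvb : v ∈ I.compatibleProfiles (I.thresholdMatrix a) b := ⟨hv, hs, by simp [b]⟩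
  calc I.SW v μ ≤ 25 * a ^ 2 * I.certifiedWelfare (I.thresholdMatrix a) b :=
        OSMInstance.SW_le_mul_certifiedWelfare hvb (hone hn) hcube hμ
    _ ≤ 25 * a ^ 2 * I.SW v (I.certifiedMatching (I.thresholdMatrix a) b) := by
      gcongr
      exact OSMInstance.certifiedWelfare_le_SW hvb
    _ ≤ 25 * a ^ 2 * I.SW v (f b) := by
      gcongr
      exact hv.SW_le_of_weakImprove (I.certifiedMatching_isMaxWeightMatching _ b).1 (hf b).1 (hfM b)
    _ = _ := by rw [hsq]

/-- there is a non-adaptive deterministic algorithm asking one binary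
threshold query per (agent, object) pair that always outputs a Pareto optimal matching
achieving an `O(n^(2/3))`-approximation to the optimal welfare among Pareto optimal
matchings for unit-sum valuations. -/
theorem nonadaptive_PO_unitSum_upper_bound :
    ∃ C : ℝ, 0 < C ∧ ∀ n : ℕ, ∀ I : OSMInstance n,
      ∃ T : Fin n → Fin n → ℝ, (∀ i j, 0 ≤ T i j ∧ T i j ≤ 1) ∧
      ∃ f : (Fin n → Fin n → Bool) → Finset (Fin n × Fin n),
        (∀ b, I.IsMatching (f b)) ∧
        ∀ v : Fin n → Fin n → ℝ, I.Consistent v → I.UnitSum v →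
          I.ParetoOptimal (f (fun i j => decide (T i j ≤ v i j))) ∧
          ∀ μstar, I.ParetoOptimal μstar →
            I.SW v μstar ≤
              C * (n : ℝ) ^ ((2 : ℝ) / 3) *
                I.SW v (f (fun i j => decide (T i j ≤ v i j))) := by
  refine ⟨25, by norm_num, fun n I => ?_⟩
  obtain ⟨T, hT, f, hf, hSW⟩ := nonadaptive_PO_unitSum_upper_bound_general I
  exact ⟨T, hT, f, fun b => (hf b).1, fun v hv hs => ⟨hf _, fun μ hμ => hSW v hv hs μ hμ.1⟩⟩
end
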